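/- arXiv:1609.00170 — 3 statements merged into one kernel-verified Lean document; each statement's English description precedes it below -/
import Mathlib

section
/- Let f be analytic and univalent in the annulus A(r) = {z : r < |z| < 1}, with |f(z)| < 1 in A(r), boundary values of modulus 1 on the unit circle (i.e. |f(z)| → 1 as |z| → 1), and f(z) ≠ 0 in A(r). Then limsup_{|z|→r} |f(z)| ≤ max{2r, 4r/(1 + 4r²)} < 4r. -/
open Complex Filter

/-!
Suppose `f` omits a value `w ≠ 0` of the unit disc. A disc automorphism `φ` carries the pair `0, w`
to a symmetric pair `-a, a` with `‖w‖ = 2‖a‖ / (1 + ‖a‖²)`, so `G = φ ∘ f` omits `±a`. Since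
`‖G‖ → 1 > ‖a‖` at the outer circle, the Joukowski equation `h + h⁻¹ = 2 G / a` has a single-valued
holomorphic solution `h = z ^ k * exp u`, where `k` is the winding number of `f`. It is nonzero:
otherwise `log ‖f‖` would be the real part of a holomorphic function, hence have constant circle
averages, whereas it is negative and tends to `0` at the outer circle.

Now compute an area in two ways. As `(logDeriv h)² = (deriv G)² / (G² - a²)`, the metric with area
density `1 / |w² - a²|` pulls back under `G` to `|logDeriv h| |dz|`, whose area on the annulus is at
least `2 π k² log (1 / r)` by Cauchy–Schwarz on circles. On the other hand the substitution
`w = a cos ζ` turns it into the Euclidean metric, and shows that the unit disc has area at most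
`2 π log (2 / ‖a‖)`. Hence `‖a‖ ≤ 2 r`, which bounds `‖w‖`.

So every `w` of modulus strictly between `max (2r) (4r / (1 + 4r²))` and `1` is attained. By
univalence such a `w` is not a cluster value at the inner circle, so by connectedness, for levels
`c < d` in this range, near that circle `‖f‖` is either everywhere below `c` or everywhere above
`d`; the latter contradicts the minimum principle once `d` is close to `1`.
-/

section

open Function.Periodic MeasureTheory Metric Set Topology
open scoped ComplexConjugate ENNReal

variable {r R : ℝ}

/-! ### Annuli and logarithms -/

/-- The open annulus `{z : r < ‖z‖ < R}` centred at the origin. -/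
def annulus (r R : ℝ) : Set ℂ := {z | r < ‖z‖ ∧ ‖z‖ < R}

theorem isOpen_annulus : IsOpen (annulus r R) :=
  (isOpen_lt continuous_const continuous_norm).inter (isOpen_lt continuous_norm continuous_const)

theorem annulus_subset_annulus {r' R' : ℝ} (hr : r ≤ r') (hR : R' ≤ R) :
    annulus r' R' ⊆ annulus r R :=
  fun _ hz => ⟨hr.trans_lt hz.1, hz.2.trans_le hR⟩

theorem ne_zero_of_mem_annulus (hr : 0 ≤ r) {z : ℂ} (hz : z ∈ annulus r R) : z ≠ 0 :=
  norm_pos_iff.1 (hr.trans_lt hz.1)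

theorem convex_qParam_preimage_annulus : Convex ℝ (qParam 1 ⁻¹' annulus r R) := by
  have h_anti : Antitone fun y : ℝ => Real.exp (-2 * Real.pi * y / 1) := fun x y h =>
    Real.exp_le_exp.2 (by nlinarith [Real.pi_pos])
  have h_eq : qParam 1 ⁻¹' annulus r R
      = imLm ⁻¹' ((fun y : ℝ => Real.exp (-2 * Real.pi * y / 1)) ⁻¹' Ioo r R) := by
    ext ζ
    simp [annulus, norm_qParam]
  rw [h_eq]
  exact (ordConnected_Ioo.preimage_anti h_anti).convex.linear_preimage _

theorem image_qParam_preimage_annulus (hr : 0 ≤ r) :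
    qParam 1 '' (qParam 1 ⁻¹' annulus r R) = annulus r R :=
  image_preimage_eq_of_subset fun _ hz =>
    ⟨_, qParam_right_inv one_ne_zero (ne_zero_of_mem_annulus hr hz)⟩

theorem isPreconnected_annulus (hr : 0 ≤ r) : IsPreconnected (annulus r R) := by
  rw [← image_qParam_preimage_annulus hr]
  exact convex_qParam_preimage_annulus.isPreconnected.image _ continuous_qParam.continuousOn

theorem differentiableOn_of_exp_eq {U : Set ℂ} (hU : IsOpen U) {f L : ℂ → ℂ}
    (hL : ContinuousOn L U) (hf : DifferentiableOn ℂ f U) (h_exp : ∀ z ∈ U, exp (L z) = f z) :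
    DifferentiableOn ℂ L U := by
  intro z hz
  have h_der := hasStrictDerivAt_exp (L z)
  have h_inv := (h_der.to_localInverse (exp_ne_zero _)).hasDerivAt.differentiableAt
  have h_eq : L =ᶠ[𝓝 z] fun w => h_der.localInverse exp _ _ (exp_ne_zero _) (f w) := by
    filter_upwards [hU.mem_nhds hz, (hL.continuousAt (hU.mem_nhds hz)).eventually
      (h_der.hasStrictFDerivAt_equiv (exp_ne_zero _)).eventually_left_inverse] with w hw h
    rw [← h_exp w hw]
    exact h.symm
  exact ((DifferentiableAt.comp z (h_exp z hz ▸ h_inv)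
    (hf.differentiableAt (hU.mem_nhds hz))).congr_of_eventuallyEq h_eq).differentiableWithinAt

theorem exists_differentiableOn_exp_eq {U : Set ℂ} (hU : IsOpen U)
    (h_conn : IsSimplyConnected U) {f : ℂ → ℂ} (hf : DifferentiableOn ℂ f U)
    (hf0 : ∀ z ∈ U, f z ≠ 0) :
    ∃ L : ℂ → ℂ, DifferentiableOn ℂ L U ∧ ∀ z ∈ U, exp (L z) = f z := by
  obtain ⟨L, hL, h_exp⟩ := exists_continuousOn_eqOn_exp_comp h_conn hU hf.continuousOn
    (by rintro ⟨z, hz, h⟩; exact hf0 z hz h)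
  exact ⟨L, differentiableOn_of_exp_eq hU hL hf h_exp, h_exp⟩

theorem exists_int_of_exp_eq_one {U : Set ℂ} (hU : IsPreconnected U) {f : ℂ → ℂ}
    (hf : ContinuousOn f U) (h_exp : ∀ z ∈ U, exp (f z) = 1) :
    ∃ k : ℤ, ∀ z ∈ U, f z = k * (2 * Real.pi * I) := by
  rcases U.eq_empty_or_nonempty with rfl | ⟨z₀, hz₀⟩
  · exact ⟨0, by simp⟩
  obtain ⟨k, hk⟩ := exp_eq_one_iff.1 (h_exp z₀ hz₀)
  refine ⟨k, fun z hz => hk ▸ isCoveringMap_exp.constOn_of_comp hU hf (fun a ha b hb => ?_) hz hz₀⟩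
  rw [Subtype.mk.injEq, h_exp a ha, h_exp b hb]

theorem isSimplyConnected_qParam_preimage_annulus (hr : 0 ≤ r) (h_ne : (annulus r R).Nonempty) :
    IsSimplyConnected (qParam 1 ⁻¹' annulus r R) := by
  rw [← image_qParam_preimage_annulus hr] at h_ne
  have := convex_qParam_preimage_annulus.contractibleSpace h_ne.of_image
  exact inferInstanceAs (SimplyConnectedSpace _)

theorem qParam_one_add_one (ζ : ℂ) : qParam 1 (ζ + 1) = qParam 1 ζ := by
  simp [qParam, mul_add, exp_add]

theorem exists_log_comp_qParam (hr : 0 ≤ r) {f : ℂ → ℂ} (hf : DifferentiableOn ℂ f (annulus r R))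
    (hf0 : ∀ z ∈ annulus r R, f z ≠ 0) :
    ∃ (k : ℤ) (L : ℂ → ℂ), DifferentiableOn ℂ L (qParam 1 ⁻¹' annulus r R) ∧
      (∀ ζ ∈ qParam 1 ⁻¹' annulus r R, exp (L ζ) = f (qParam 1 ζ)) ∧
      ∀ ζ ∈ qParam 1 ⁻¹' annulus r R, L (ζ + 1) = L ζ + k * (2 * Real.pi * I) := by
  rcases (annulus r R).eq_empty_or_nonempty with h_empty | h_ne
  · exact ⟨0, 0, by simp [h_empty]⟩
  set S := qParam 1 ⁻¹' annulus r R with hS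
  have h_shift : ∀ ζ ∈ S, ζ + 1 ∈ S := fun ζ hζ => by
    rwa [hS, mem_preimage, qParam_one_add_one]
  obtain ⟨L, hL, h_exp⟩ := exists_differentiableOn_exp_eq
    (isOpen_annulus.preimage continuous_qParam)
    (isSimplyConnected_qParam_preimage_annulus hr h_ne)
    (hf.comp differentiable_qParam.differentiableOn fun _ h => h) fun ζ hζ => hf0 _ hζ
  have hL' : ContinuousOn (fun ζ => L (ζ + 1) - L ζ) S :=
    (hL.continuousOn.comp (by fun_prop) h_shift).sub hL.continuousOn
  obtain ⟨k, hk⟩ := exists_int_of_exp_eq_one convex_qParam_preimage_annulus.isPreconnected hL'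
    fun ζ hζ => by
      rw [exp_sub, h_exp _ (h_shift ζ hζ), h_exp ζ hζ, Function.comp_apply, Function.comp_apply,
        qParam_one_add_one, div_self (hf0 _ hζ)]
  exact ⟨k, L, hL, h_exp, fun ζ hζ => by rw [← hk ζ hζ]; ring⟩

/- Passing to the annulus: `L - 2πikζ` has period `1`, so it is a function of `z = exp (2πiζ)`. -/
theorem exists_eq_zpow_mul_exp (hr : 0 ≤ r) {f : ℂ → ℂ} (hf : DifferentiableOn ℂ f (annulus r R))
    (hf0 : ∀ z ∈ annulus r R, f z ≠ 0) :
    ∃ (k : ℤ) (g : ℂ → ℂ), DifferentiableOn ℂ g (annulus r R) ∧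
      ∀ z ∈ annulus r R, f z = z ^ k * exp (g z) := by
  obtain ⟨k, L, hL, h_exp, h_add⟩ := exists_log_comp_qParam hr hf hf0
  set S := qParam 1 ⁻¹' annulus r R with hS
  have hS_open : IsOpen S := isOpen_annulus.preimage continuous_qParam
  set N : ℂ → ℂ := S.indicator fun ζ => L ζ - k * (2 * Real.pi * I) * ζ
  have h_per : Function.Periodic N (1 : ℝ) := fun ζ => by
    have h_iff : ζ + 1 ∈ S ↔ ζ ∈ S := by rw [hS, mem_preimage, mem_preimage, qParam_one_add_one]
    by_cases hζ : ζ ∈ S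
    · simp only [N, ofReal_one, indicator_of_mem hζ, indicator_of_mem (h_iff.2 hζ), h_add ζ hζ]
      ring
    · simp only [N, ofReal_one, indicator_of_notMem hζ, indicator_of_notMem (mt h_iff.1 hζ)]
  refine ⟨k, cuspFunction 1 N, ?_, ?_⟩ <;> rw [← image_qParam_preimage_annulus hr]
  · rintro _ ⟨ζ, hζ, rfl⟩
    have h_eq : N =ᶠ[𝓝 ζ] fun ζ => L ζ - k * (2 * Real.pi * I) * ζ :=
      eventually_of_mem (hS_open.mem_nhds hζ) fun _ h => indicator_of_mem h _
    have hL_at := hL.differentiableAt (hS_open.mem_nhds hζ)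
    refine (differentiableAt_cuspFunction one_ne_zero h_per
      (DifferentiableAt.congr_of_eventuallyEq ?_ h_eq)).differentiableWithinAt
    fun_prop
  · rintro _ ⟨ζ, hζ, rfl⟩
    rw [eq_cuspFunction one_ne_zero h_per, show N ζ = _ from indicator_of_mem hζ _, exp_sub,
      h_exp ζ hζ]
    have h_zpow : qParam 1 ζ ^ k = exp (k * (2 * Real.pi * I) * ζ) := by
      rw [qParam, ← exp_int_mul, ofReal_one, div_one]
      ring_nf
    rw [h_zpow]
    field_simp [exp_ne_zero]

/-! ### Circle averages and winding -/

theorem eventually_comap_norm_nhdsLT_iff (h : r < R) {p : ℂ → Prop} :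
    (∀ᶠ z in comap norm (𝓝[<] R), p z) ↔ ∃ ρ ∈ Ico r R, ∀ z ∈ annulus ρ R, p z := by
  rw [eventually_comap, Filter.Eventually, mem_nhdsLT_iff_exists_mem_Ico_Ioo_subset h]
  exact exists_congr fun ρ => and_congr_right fun _ =>
    ⟨fun hp z hz => hp hz z rfl, fun hp x hx z hz => hp z (by rwa [← hz] at hx)⟩

theorem eventually_comap_norm_nhdsGT_iff (h : r < R) {p : ℂ → Prop} :
    (∀ᶠ z in comap norm (𝓝[>] r), p z) ↔ ∃ ρ ∈ Ioc r R, ∀ z ∈ annulus r ρ, p z := by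
  rw [eventually_comap, Filter.Eventually, mem_nhdsGT_iff_exists_mem_Ioc_Ioo_subset h]
  exact exists_congr fun ρ => and_congr_right fun _ =>
    ⟨fun hp z hz => hp hz z rfl, fun hp x hx z hz => hp z (by rwa [← hz] at hx)⟩

theorem eventually_mem_annulus_nhdsLT (h : r < R) :
    ∀ᶠ z in comap norm (𝓝[<] R), z ∈ annulus r R :=
  (eventually_comap_norm_nhdsLT_iff h).2 ⟨r, ⟨le_rfl, h⟩, fun _ => id⟩

theorem eventually_mem_annulus_nhdsGT (h : r < R) :
    ∀ᶠ z in comap norm (𝓝[>] r), z ∈ annulus r R :=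
  (eventually_comap_norm_nhdsGT_iff h).2 ⟨R, ⟨h, le_rfl⟩, fun _ => id⟩

theorem principal_annulus_inf_comap_nhds_right (h : r < R) :
    𝓟 (annulus r R) ⊓ comap norm (𝓝 R) = comap norm (𝓝[<] R) := by
  rw [show annulus r R = norm ⁻¹' Ioo r R from rfl, ← comap_principal, ← comap_inf, inf_comm,
    ← nhdsWithin, nhdsWithin_Ioo_eq_nhdsLT h]

theorem principal_annulus_inf_comap_nhds_left (h : r < R) :
    𝓟 (annulus r R) ⊓ comap norm (𝓝 r) = comap norm (𝓝[>] r) := by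
  rw [show annulus r R = norm ⁻¹' Ioo r R from rfl, ← comap_principal, ← comap_inf, inf_comm,
    ← nhdsWithin, nhdsWithin_Ioo_eq_nhdsGT h]

theorem sphere_subset_annulus {ρ : ℝ} (hρ : ρ ∈ Ioo r R) : sphere 0 ρ ⊆ annulus r R :=
  fun z hz => by simpa [annulus, mem_sphere_zero_iff_norm.1 hz] using hρ

theorem circleIntegrable_of_continuousOn_annulus {E : Type*} [NormedAddCommGroup E] (hr : 0 ≤ r)
    {f : ℂ → E} (hf : ContinuousOn f (annulus r R)) {ρ : ℝ} (hρ : ρ ∈ Ioo r R) :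
    CircleIntegrable f 0 ρ :=
  (hf.mono (sphere_subset_annulus hρ)).circleIntegrable (hr.trans hρ.1.le)

theorem circleAverage_eq_of_differentiableOn_annulus (hr : 0 ≤ r) {f : ℂ → ℂ}
    (hf : DifferentiableOn ℂ f (annulus r R)) {ρ σ : ℝ} (hρ : ρ ∈ Ioo r R) (hσ : σ ∈ Ioo r R) :
    Real.circleAverage f 0 ρ = Real.circleAverage f 0 σ := by
  wlog h : σ ≤ ρ generalizing ρ σ
  · exact (this hσ hρ (le_of_not_ge h)).symm
  have hσ0 : 0 < σ := hr.trans_lt hσ.1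
  have h_sub : closedBall (0 : ℂ) ρ \ ball 0 σ ⊆ annulus r R := fun z hz => by
    simp only [Set.mem_sdiff, mem_closedBall_zero_iff, mem_ball_zero_iff, not_lt] at hz
    exact ⟨hσ.1.trans_le hz.2, hz.1.trans_lt hρ.2⟩
  rw [Real.circleAverage_eq_circleIntegral (hσ0.trans_le h).ne',
    Real.circleAverage_eq_circleIntegral hσ0.ne',
    circleIntegral_sub_center_inv_smul_eq_of_differentiable_on_annulus_off_countable hσ0 h
      countable_empty (hf.continuousOn.mono h_sub)
      fun z hz => hf.differentiableAt (isOpen_annulus.mem_nhds (h_sub ?_))]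
  exact sdiff_subset_sdiff ball_subset_closedBall ball_subset_closedBall hz.1

theorem circleAverage_mul_deriv_eq_zero (hr : 0 ≤ r) {f : ℂ → ℂ}
    (hf : DifferentiableOn ℂ f (annulus r R)) {ρ : ℝ} (hρ : ρ ∈ Ioo r R) :
    Real.circleAverage (fun z => z * deriv f z) 0 ρ = 0 := by
  have hρ0 : 0 < ρ := hr.trans_lt hρ.1
  rw [Real.circleAverage_eq_circleIntegral hρ0.ne']
  have h_congr : (∮ z in C(0, ρ), (z - 0)⁻¹ • (z * deriv f z)) = ∮ z in C(0, ρ), deriv f z := by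
    refine circleIntegral.integral_congr hρ0.le fun z hz => ?_
    have hz0 := ne_zero_of_mem_annulus hr (sphere_subset_annulus hρ hz)
    simp [hz0]
  rw [h_congr, circleIntegral.integral_eq_zero_of_hasDerivWithinAt hρ0.le fun z hz =>
    ((hf.differentiableAt (isOpen_annulus.mem_nhds
      (sphere_subset_annulus hρ hz))).hasDerivAt.hasDerivWithinAt), smul_zero]

theorem not_tendsto_re_zero_of_re_neg (hr : 0 ≤ r) (hrR : r < R) {g : ℂ → ℂ}
    (hg : DifferentiableOn ℂ g (annulus r R)) (h_neg : ∀ z ∈ annulus r R, (g z).re < 0) :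
    ¬ Tendsto (fun z => (g z).re) (comap norm (𝓝[<] R)) (𝓝 0) := by
  intro h_lim
  have h_cont : ContinuousOn (fun z => (g z).re) (annulus r R) :=
    continuous_re.comp_continuousOn hg.continuousOn
  have h_int {ρ} (hρ : ρ ∈ Ioo r R) := circleIntegrable_of_continuousOn_annulus hr h_cont hρ
  have h_abs {ρ} (hρ : ρ ∈ Ioo r R) : |ρ| = ρ := abs_of_pos (hr.trans_lt hρ.1)
  have h_avg {ρ} (hρ : ρ ∈ Ioo r R) :
      Real.circleAverage (fun z => (g z).re) 0 ρ = (Real.circleAverage g 0 ρ).re :=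
    reCLM.circleAverage_comp_comm (circleIntegrable_of_continuousOn_annulus hr hg.continuousOn hρ)
  obtain ⟨ρ, hρ⟩ := exists_between hrR
  obtain ⟨w, hw, h_max⟩ := (isCompact_sphere (0 : ℂ) ρ).exists_isMaxOn
    (NormedSpace.sphere_nonempty.2 (hr.trans hρ.1.le)) (h_cont.mono (sphere_subset_annulus hρ))
  have hw_neg := h_neg w (sphere_subset_annulus hρ hw)
  obtain ⟨τ, hτ, h_near⟩ := (eventually_comap_norm_nhdsLT_iff hrR).1
    (h_lim.eventually (lt_mem_nhds (by linarith : (g w).re / 2 < 0)))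
  obtain ⟨σ, hσ⟩ := exists_between hτ.2
  have hσ' : σ ∈ Ioo r R := ⟨hτ.1.trans_lt hσ.1, hσ.2⟩
  have h_half : (g w).re / 2 ≤ (g w).re := calc
    (g w).re / 2 = Real.circleAverage (fun _ => (g w).re / 2) 0 σ :=
      (Real.circleAverage_const _ _ _).symm
    _ ≤ Real.circleAverage (fun z => (g z).re) 0 σ :=
      Real.circleAverage_mono (circleIntegrable_const _ _ _) (h_int hσ') fun z hz =>
        (h_near z (sphere_subset_annulus hσ (h_abs hσ' ▸ hz))).le
    _ = Real.circleAverage (fun z => (g z).re) 0 ρ := by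
      rw [h_avg hσ', h_avg hρ, circleAverage_eq_of_differentiableOn_annulus hr hg hσ' hρ]
    _ ≤ (g w).re :=
      Real.circleAverage_mono_on_of_le_circle (h_int hρ) fun z hz => h_max (h_abs hρ ▸ hz)
  linarith

theorem exponent_ne_zero_of_tendsto_norm_one (hr : 0 ≤ r) (hrR : r < R) {f g : ℂ → ℂ} {k : ℤ}
    (hg : DifferentiableOn ℂ g (annulus r R)) (h_eq : ∀ z ∈ annulus r R, f z = z ^ k * exp (g z))
    (h_lt : ∀ z ∈ annulus r R, ‖f z‖ < 1)
    (h_lim : Tendsto (fun z => ‖f z‖) (comap norm (𝓝[<] R)) (𝓝 1)) : k ≠ 0 := by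
  rintro rfl
  have h_re : ∀ z ∈ annulus r R, (g z).re = Real.log ‖f z‖ := fun z hz => by
    rw [h_eq z hz, zpow_zero, one_mul, norm_exp, Real.log_exp]
  have h_pos : ∀ z ∈ annulus r R, 0 < ‖f z‖ := fun z hz => by
    rw [h_eq z hz, zpow_zero, one_mul, norm_exp]
    exact Real.exp_pos _
  refine not_tendsto_re_zero_of_re_neg hr hrR hg
    (fun z hz => h_re z hz ▸ Real.log_neg (h_pos z hz) (h_lt z hz)) ?_
  rw [← Real.log_one]
  refine (h_lim.log one_ne_zero).congr' ?_
  filter_upwards [eventually_mem_annulus_nhdsLT hrR] with z hz using (h_re z hz).symm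

theorem mul_logDeriv_zpow_mul_exp {u : ℂ → ℂ} {k : ℤ} {z : ℂ} (hz : z ≠ 0)
    (hu : DifferentiableAt ℂ u z) :
    z * logDeriv (fun w => w ^ k * exp (u w)) z = k + z * deriv u z := by
  have h_exp : logDeriv (fun w => exp (u w)) z = deriv u z := by
    rw [logDeriv_apply, hu.hasDerivAt.cexp.deriv, mul_div_cancel_left₀ _ (exp_ne_zero _)]
  rw [logDeriv_mul (f := fun w => w ^ k) z (zpow_ne_zero k hz) (exp_ne_zero (u z))
    (differentiableAt_zpow.2 (.inl hz)) hu.cexp, logDeriv_zpow, h_exp, mul_add,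
    mul_div_cancel₀ _ hz]

/- The argument principle: the exponent is the winding number of `f` along the circle. -/
theorem circleAverage_mul_logDeriv_eq (hr : 0 ≤ r) {f u : ℂ → ℂ} {k : ℤ}
    (hu : DifferentiableOn ℂ u (annulus r R)) (h_eq : ∀ z ∈ annulus r R, f z = z ^ k * exp (u z))
    {ρ : ℝ} (hρ : ρ ∈ Ioo r R) : Real.circleAverage (fun z => z * logDeriv f z) 0 ρ = k := by
  have h_log : ∀ z ∈ sphere (0 : ℂ) |ρ|, z * logDeriv f z = k + z * deriv u z := fun z hz => by
    rw [abs_of_pos (hr.trans_lt hρ.1)] at hz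
    have hzA := sphere_subset_annulus hρ hz
    have h_nhds := isOpen_annulus.mem_nhds hzA
    rw [(logDeriv_congr_nhds (eventually_of_mem h_nhds h_eq)).eq_of_nhds,
      mul_logDeriv_zpow_mul_exp (ne_zero_of_mem_annulus hr hzA) (hu.differentiableAt h_nhds)]
  have h_int : CircleIntegrable (fun z => z * deriv u z) 0 ρ :=
    circleIntegrable_of_continuousOn_annulus hr
      (continuousOn_id.mul (hu.deriv isOpen_annulus).continuousOn) hρ
  rw [Real.circleAverage_congr_sphere h_log,
    Real.circleAverage_fun_add (circleIntegrable_const _ _ _) h_int, Real.circleAverage_const,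
    circleAverage_mul_deriv_eq_zero hr hu hρ, add_zero]

theorem exists_exp_eq_of_eventually_mem_slitPlane (hr : 0 ≤ r) (hrR : r < R) {f : ℂ → ℂ}
    (hf : DifferentiableOn ℂ f (annulus r R)) (hf0 : ∀ z ∈ annulus r R, f z ≠ 0)
    (h_slit : ∀ᶠ z in comap norm (𝓝[<] R), f z ∈ slitPlane) :
    ∃ g : ℂ → ℂ, DifferentiableOn ℂ g (annulus r R) ∧ (∀ z ∈ annulus r R, exp (g z) = f z) ∧
      ∀ᶠ z in comap norm (𝓝[<] R), g z = log (f z) := by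
  obtain ⟨ρ, hρ, h_slit⟩ := (eventually_comap_norm_nhdsLT_iff hrR).1 h_slit
  have h_sub : annulus ρ R ⊆ annulus r R := annulus_subset_annulus hρ.1 le_rfl
  obtain ⟨k, g, hg, h_eq⟩ := exists_eq_zpow_mul_exp hr hf hf0
  have h_log : DifferentiableOn ℂ (fun z => log (f z)) (annulus ρ R) := (hf.mono h_sub).clog h_slit
  have h_exp : ∀ z ∈ annulus ρ R, f z = z ^ (0 : ℤ) * exp (log (f z)) := fun z hz => by
    rw [zpow_zero, one_mul, exp_log (hf0 z (h_sub hz))]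
  obtain rfl : k = 0 := by
    obtain ⟨σ, hσ⟩ := exists_between hρ.2
    have h₁ := circleAverage_mul_logDeriv_eq hr hg h_eq ⟨hρ.1.trans_lt hσ.1, hσ.2⟩
    have h₂ := circleAverage_mul_logDeriv_eq (hr.trans hρ.1) h_log h_exp hσ
    exact_mod_cast h₁.symm.trans h₂
  obtain ⟨m, hm⟩ := exists_int_of_exp_eq_one (isPreconnected_annulus (hr.trans hρ.1))
    (h_log.sub (hg.mono h_sub)).continuousOn fun z hz => by
      rw [Pi.sub_apply, exp_sub, exp_log (hf0 z (h_sub hz)), h_eq z (h_sub hz), zpow_zero, one_mul,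
        div_self (exp_ne_zero _)]
  refine ⟨fun z => g z + m * (2 * Real.pi * I), hg.add_const _, fun z hz => ?_,
    (eventually_comap_norm_nhdsLT_iff hrR).2 ⟨ρ, hρ, fun z hz => ?_⟩⟩
  · rw [exp_add, exp_int_mul_two_pi_mul_I, mul_one, h_eq z hz, zpow_zero, one_mul]
  · exact eq_add_of_sub_eq' (hm z hz) |>.symm

/-! ### Joukowski lifts and disc automorphisms -/

theorem sq_logDeriv_mul_of_add_inv_eq {h P : ℂ → ℂ} {z : ℂ} (hh : DifferentiableAt ℂ h z)
    (h0 : h z ≠ 0) (h_eq : ∀ᶠ w in 𝓝 z, h w + (h w)⁻¹ = 2 * P w) :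
    logDeriv h z ^ 2 * (P z ^ 2 - 1) = deriv P z ^ 2 := by
  have h_der : HasDerivAt (fun w => (h w + (h w)⁻¹) / 2)
      ((deriv h z + -deriv h z / h z ^ 2) / 2) z :=
    (hh.hasDerivAt.add (hh.hasDerivAt.inv h0)).div_const 2
  have hP : P =ᶠ[𝓝 z] fun w => (h w + (h w)⁻¹) / 2 := by
    filter_upwards [h_eq] with w hw
    rw [hw, mul_div_cancel_left₀ _ two_ne_zero]
  rw [logDeriv_apply, hP.deriv_eq, h_der.deriv, hP.eq_of_nhds]
  field_simp
  ring

theorem re_sub_one_div_add_one_pos {P : ℂ} (hP : 1 < ‖P‖) : 0 < ((P - 1) / (P + 1)).re := by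
  have h_ne : P + 1 ≠ 0 := fun h => by simp [eq_neg_of_add_eq_zero_left h] at hP
  have h_sq : 1 < normSq P := by
    rw [normSq_eq_norm_sq]
    exact one_lt_pow₀ hP two_ne_zero
  have h_re : ((P - 1) / (P + 1)).re = (normSq P - 1) / normSq (P + 1) := by
    simp only [div_re, normSq_apply, sub_re, add_re, sub_im, add_im, one_re, one_im]
    ring
  rw [h_re]
  exact div_pos (sub_pos.2 h_sq) (normSq_pos.2 h_ne)

theorem re_exp_half_log_pos {w : ℂ} (hw : w ∈ slitPlane) : 0 < (exp (log w / 2)).re := by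
  have h_arg : arg w / 2 ∈ Ioo (-(Real.pi / 2)) (Real.pi / 2) := by
    have := neg_pi_lt_arg w
    have := (arg_le_pi w).lt_of_ne (slitPlane_arg_ne_pi hw)
    constructor <;> linarith
  rw [exp_re, div_ofNat_im, log_im]
  exact mul_pos (Real.exp_pos _) (Real.cos_pos_of_mem_Ioo h_arg)

/- With `η² = (P - 1) / (P + 1)` one has `P + √(P² - 1) = (P + 1) (1 + η)² / 2`; the factor `1 + η`
has a holomorphic logarithm because its real part is positive near the outer circle. -/
theorem exists_joukowski_lift (hr : 0 ≤ r) (hrR : r < R) {P : ℂ → ℂ}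
    (hP : DifferentiableOn ℂ P (annulus r R)) (h_ne : ∀ z ∈ annulus r R, P z ≠ 1)
    (h_ne' : ∀ z ∈ annulus r R, P z ≠ -1) (h_lt : ∀ᶠ z in comap norm (𝓝[<] R), 1 < ‖P z‖) :
    ∃ v : ℂ → ℂ, DifferentiableOn ℂ v (annulus r R) ∧ ∀ z ∈ annulus r R,
      (P z + 1) * exp (v z) + ((P z + 1) * exp (v z))⁻¹ = 2 * P z := by
  have h_add : ∀ z ∈ annulus r R, P z + 1 ≠ 0 := fun z hz h =>
    h_ne' z hz (eq_neg_of_add_eq_zero_left h)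
  have h_slit : ∀ᶠ z in comap norm (𝓝[<] R), (P z - 1) / (P z + 1) ∈ slitPlane :=
    h_lt.mono fun z hz => .inl (re_sub_one_div_add_one_pos hz)
  obtain ⟨E, hE, hE_exp, hE_log⟩ := exists_exp_eq_of_eventually_mem_slitPlane hr hrR
    ((hP.sub_const 1).div (hP.add_const 1) h_add)
    (fun z hz => div_ne_zero (sub_ne_zero.2 (h_ne z hz)) (h_add z hz)) h_slit
  have h_sq : ∀ z ∈ annulus r R, (P z + 1) * exp (E z / 2) ^ 2 = P z - 1 := fun z hz => by
    rw [← exp_nat_mul, Nat.cast_ofNat, mul_div_cancel₀ _ two_ne_zero, hE_exp z hz]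
    exact mul_div_cancel₀ _ (h_add z hz)
  have h_one_add : ∀ z ∈ annulus r R, 1 + exp (E z / 2) ≠ 0 := fun z hz h => by
    have h_abs := h_sq z hz
    rw [eq_neg_of_add_eq_zero_right h] at h_abs
    exact two_ne_zero (α := ℂ) (by linear_combination h_abs)
  obtain ⟨Λ, hΛ, hΛ_exp, -⟩ := exists_exp_eq_of_eventually_mem_slitPlane hr hrR
    ((hE.div_const 2).cexp.const_add 1) h_one_add (by
      filter_upwards [h_slit, hE_log] with z hz h_log
      refine .inl ?_
      rw [h_log, add_re, one_re]
      exact add_pos one_pos (re_exp_half_log_pos hz))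
  refine ⟨fun z => 2 * Λ z - log 2, (hΛ.const_mul 2).sub_const _, fun z hz => ?_⟩
  have h_exp : exp (2 * Λ z - log 2) = (1 + exp (E z / 2)) ^ 2 / 2 := by
    rw [exp_sub, exp_log two_ne_zero, ← hΛ_exp z hz, ← exp_nat_mul, Nat.cast_ofNat]
  have h_mul : (P z + 1) * ((1 + exp (E z / 2)) ^ 2 / 2) *
      ((P z + 1) * ((1 - exp (E z / 2)) ^ 2 / 2)) = 1 := by
    linear_combination (P z + 1 - (P z + 1) * exp (E z / 2) ^ 2 + 2) / 4 * -h_sq z hz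
  rw [h_exp, ← eq_inv_of_mul_eq_one_right h_mul]
  linear_combination h_sq z hz

/-- The automorphism of the unit disc that sends `a` to `0`. -/
noncomputable def discAutomorphism (a z : ℂ) : ℂ := (z - a) / (1 - conj a * z)

theorem re_one_sub_conj_mul_pos {a z : ℂ} (ha : ‖a‖ < 1) (hz : ‖z‖ < 1) :
    0 < (1 - conj a * z).re := by
  have h_norm : ‖conj a * z‖ < 1 := by
    rw [norm_mul, norm_conj]
    exact mul_lt_one_of_nonneg_of_lt_one_left (norm_nonneg a) ha hz.le
  rw [sub_re, one_re]
  linarith [re_le_norm (conj a * z)]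

theorem one_sub_conj_mul_ne_zero {a z : ℂ} (ha : ‖a‖ < 1) (hz : ‖z‖ < 1) : 1 - conj a * z ≠ 0 :=
  fun h => (re_one_sub_conj_mul_pos ha hz).ne' (by rw [h, zero_re])

theorem one_sub_norm_sq_discAutomorphism {a z : ℂ} (ha : ‖a‖ < 1) (hz : ‖z‖ < 1) :
    1 - ‖discAutomorphism a z‖ ^ 2 =
      (1 - ‖a‖ ^ 2) * (1 - ‖z‖ ^ 2) / ‖1 - conj a * z‖ ^ 2 := by
  have h_ne : normSq (1 - conj a * z) ≠ 0 := (normSq_pos.2 (one_sub_conj_mul_ne_zero ha hz)).ne'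
  simp only [discAutomorphism, norm_div, div_pow, ← normSq_eq_norm_sq]
  rw [one_sub_div h_ne]
  congr 1
  simp only [normSq_apply, sub_re, sub_im, mul_re, mul_im, conj_re, conj_im, one_re, one_im]
  ring

theorem norm_discAutomorphism_lt_one {a z : ℂ} (ha : ‖a‖ < 1) (hz : ‖z‖ < 1) :
    ‖discAutomorphism a z‖ < 1 := by
  have h_pos : 0 < 1 - ‖discAutomorphism a z‖ ^ 2 := by
    rw [one_sub_norm_sq_discAutomorphism ha hz]
    have := norm_pos_iff.2 (one_sub_conj_mul_ne_zero ha hz)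
    have := sub_pos.2 (pow_lt_one₀ (norm_nonneg a) ha two_ne_zero)
    have := sub_pos.2 (pow_lt_one₀ (norm_nonneg z) hz two_ne_zero)
    positivity
  nlinarith [norm_nonneg (discAutomorphism a z)]

theorem one_sub_norm_le_norm_one_sub_conj_mul {a z : ℂ} (hz : ‖z‖ ≤ 1) :
    1 - ‖a‖ ≤ ‖1 - conj a * z‖ := calc
  1 - ‖a‖ ≤ ‖(1 : ℂ)‖ - ‖conj a * z‖ := by
    rw [norm_one, norm_mul, norm_conj]
    exact sub_le_sub_left (mul_le_of_le_one_right (norm_nonneg a) hz) 1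
  _ ≤ ‖1 - conj a * z‖ := norm_sub_norm_le _ _

theorem one_sub_div_le_norm_discAutomorphism {a z : ℂ} (ha : ‖a‖ < 1) (hz : ‖z‖ < 1) :
    1 - (1 - ‖z‖ ^ 2) / (1 - ‖a‖) ^ 2 ≤ ‖discAutomorphism a z‖ := by
  have hz_sq : 0 ≤ 1 - ‖z‖ ^ 2 := sub_nonneg.2 (pow_le_one₀ (norm_nonneg z) hz.le)
  have h_sq : 1 - ‖discAutomorphism a z‖ ^ 2 ≤ (1 - ‖z‖ ^ 2) / (1 - ‖a‖) ^ 2 := by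
    rw [one_sub_norm_sq_discAutomorphism ha hz]
    refine div_le_div₀ hz_sq (mul_le_of_le_one_left hz_sq ?_) (pow_pos (sub_pos.2 ha) 2)
      (pow_le_pow_left₀ (sub_pos.2 ha).le (one_sub_norm_le_norm_one_sub_conj_mul hz.le) 2)
    exact sub_le_self 1 (sq_nonneg _)
  nlinarith [norm_nonneg (discAutomorphism a z), norm_discAutomorphism_lt_one ha hz]

theorem tendsto_norm_discAutomorphism {α : Type*} {l : Filter α} {a : ℂ} (ha : ‖a‖ < 1)
    {f : α → ℂ} (hf : ∀ᶠ x in l, ‖f x‖ < 1) (h_lim : Tendsto (fun x => ‖f x‖) l (𝓝 1)) :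
    Tendsto (fun x => ‖discAutomorphism a (f x)‖) l (𝓝 1) := by
  have h_bound : ∀ᶠ x in l, 1 - (1 - ‖f x‖ ^ 2) / (1 - ‖a‖) ^ 2 ≤ ‖discAutomorphism a (f x)‖ :=
    hf.mono fun x hx => one_sub_div_le_norm_discAutomorphism ha hx
  refine tendsto_of_tendsto_of_tendsto_of_le_of_le' ?_ tendsto_const_nhds h_bound
    (hf.mono fun x hx => (norm_discAutomorphism_lt_one ha hx).le)
  simpa using ((h_lim.pow 2).const_sub 1).div_const ((1 - ‖a‖) ^ 2) |>.const_sub 1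

theorem injOn_discAutomorphism {a : ℂ} (ha : ‖a‖ < 1) : InjOn (discAutomorphism a) (ball 0 1) := by
  intro z hz w hw h
  rw [mem_ball_zero_iff] at hz hw
  have h_sub : (z - w) * (1 - conj a * a) = 0 := by
    rw [discAutomorphism, discAutomorphism, div_eq_div_iff (one_sub_conj_mul_ne_zero ha hz)
      (one_sub_conj_mul_ne_zero ha hw)] at h
    linear_combination h
  exact sub_eq_zero.1 ((mul_eq_zero.1 h_sub).resolve_right (one_sub_conj_mul_ne_zero ha ha))

/-! ### Area estimates -/

theorem lintegral_image_eq_lintegral_norm_deriv_sq_mul {s : Set ℂ} (hs : IsOpen s) {g : ℂ → ℂ}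
    (hg : DifferentiableOn ℂ g s) (hinj : InjOn g s) (w : ℂ → ℝ≥0∞) :
    ∫⁻ z in g '' s, w z = ∫⁻ z in s, ENNReal.ofReal (‖deriv g z‖ ^ 2) * w (g z) := by
  have h_det (c : ℂ) :
      |((ContinuousLinearMap.toSpanSingleton ℂ c).restrictScalars ℝ).det| = ‖c‖ ^ 2 := by
    simp [ContinuousLinearMap.det, LinearMap.det_restrictScalars, Algebra.norm_complex_eq,
      normSq_eq_norm_sq]
  rw [lintegral_image_eq_lintegral_abs_det_fderiv_mul volume hs.measurableSet
    (fun z hz => ((hg.differentiableAt (hs.mem_nhds hz)).hasDerivAt.hasFDerivAt.restrictScalars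
      ℝ).hasFDerivWithinAt) hinj]
  simp only [h_det]

theorem lintegral_annulus_eq_lintegral_circleMap (hr : 0 ≤ r) {F : ℂ → ℝ≥0∞}
    (hF : ContinuousOn F (annulus r R)) :
    ∫⁻ z in annulus r R, F z = ∫⁻ ρ in Ioo r R,
      ENNReal.ofReal ρ * ∫⁻ θ in Ioo (-Real.pi) Real.pi, F (circleMap 0 ρ θ) := by
  have h_symm (p : ℝ × ℝ) : Complex.polarCoord.symm p = circleMap 0 p.1 p.2 := by
    rw [Complex.polarCoord_symm_apply, circleMap_zero, exp_mul_I, ofReal_cos, ofReal_sin]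
  have h_maps : MapsTo (fun p : ℝ × ℝ => circleMap 0 p.1 p.2)
      (Ioo r R ×ˢ Ioo (-Real.pi) Real.pi) (annulus r R) := fun p hp => by
    simpa [annulus, norm_circleMap_zero, abs_of_pos (hr.trans_lt hp.1.1)] using hp.1
  have h_meas : AEMeasurable (fun p : ℝ × ℝ => ENNReal.ofReal p.1 * F (circleMap 0 p.1 p.2))
      (((volume : Measure ℝ).restrict (Ioo r R)).prod
        ((volume : Measure ℝ).restrict (Ioo (-Real.pi) Real.pi))) := by
    rw [Measure.prod_restrict]
    refine (by fun_prop : Measurable fun p : ℝ × ℝ => ENNReal.ofReal p.1).aemeasurable.mul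
      (ContinuousOn.aemeasurable ?_ (measurableSet_Ioo.prod measurableSet_Ioo))
    exact hF.comp (by unfold circleMap; fun_prop) h_maps
  have h_ind : ∀ p ∈ polarCoord.target,
      ENNReal.ofReal p.1 • (annulus r R).indicator F (Complex.polarCoord.symm p) =
        (Ioo r R ×ˢ Ioo (-Real.pi) Real.pi).indicator
          (fun p => ENNReal.ofReal p.1 * F (circleMap 0 p.1 p.2)) p := fun p hp => by
    have h_iff : circleMap 0 p.1 p.2 ∈ annulus r R ↔ p ∈ Ioo r R ×ˢ Ioo (-Real.pi) Real.pi := by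
      simp only [annulus, mem_ofPred_eq, norm_circleMap_zero, abs_of_pos (mem_Ioi.1 hp.1), mem_prod,
        hp.2, and_true, mem_Ioo]
    rw [h_symm, smul_eq_mul]
    by_cases hp' : p ∈ Ioo r R ×ˢ Ioo (-Real.pi) Real.pi
    · rw [indicator_of_mem hp', indicator_of_mem (h_iff.2 hp')]
    · rw [indicator_of_notMem hp', indicator_of_notMem (mt h_iff.1 hp'), mul_zero]
  have h_sub : Ioo r R ×ˢ Ioo (-Real.pi) Real.pi ⊆ polarCoord.target :=
    prod_mono (fun ρ hρ => hr.trans_lt hρ.1) Subset.rfl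
  rw [← lintegral_indicator isOpen_annulus.measurableSet, ← Complex.lintegral_comp_polarCoord_symm,
    setLIntegral_congr_fun polarCoord.open_target.measurableSet h_ind,
    setLIntegral_indicator (measurableSet_Ioo.prod measurableSet_Ioo), inter_eq_left.2 h_sub,
    Measure.volume_eq_prod, ← Measure.prod_restrict, lintegral_prod _ h_meas]
  refine lintegral_congr fun ρ => lintegral_const_mul' _ _ ENNReal.ofReal_ne_top

theorem ofReal_two_pi_mul_circleAverage {f : ℂ → ℝ} {c : ℂ} {ρ : ℝ} (hf : CircleIntegrable f c ρ)
    (h0 : ∀ z, 0 ≤ f z) :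
    ENNReal.ofReal (2 * Real.pi * Real.circleAverage f c ρ) =
      ∫⁻ θ in Ioo (-Real.pi) Real.pi, ENNReal.ofReal (f (circleMap c ρ θ)) := by
  have h_per : Function.Periodic (fun θ => f (circleMap c ρ θ)) (2 * Real.pi) :=
    (periodic_circleMap c ρ).comp f
  have h_avg : 2 * Real.pi * Real.circleAverage f c ρ =
      ∫ θ in Ioo (-Real.pi) Real.pi, f (circleMap c ρ θ) := by
    rw [← integral_Ioc_eq_integral_Ioo,
      ← intervalIntegral.integral_of_le (neg_lt_self Real.pi_pos).le, Real.circleAverage_def,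
      smul_eq_mul, mul_inv_cancel_left₀ Real.two_pi_pos.ne']
    have := h_per.intervalIntegral_add_eq 0 (-Real.pi)
    rwa [zero_add, two_mul, neg_add_cancel_left, ← two_mul] at this
  rw [h_avg, ofReal_integral_eq_lintegral_ofReal _ (ae_of_all _ fun θ => h0 _)]
  exact (h_per.intervalIntegrable₀ Real.two_pi_pos.ne' hf _ _).1.mono_set Ioo_subset_Ioc_self

theorem norm_circleAverage_sq_le {f : ℂ → ℂ} {c : ℂ} {ρ : ℝ} (hf : ContinuousOn f (sphere c |ρ|)) :
    ‖Real.circleAverage f c ρ‖ ^ 2 ≤ Real.circleAverage (fun z => ‖f z‖ ^ 2) c ρ := by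
  have h_cont : Continuous fun θ => f (circleMap c ρ θ) :=
    hf.comp_continuous (continuous_circleMap c ρ) fun θ => circleMap_mem_sphere' c ρ θ
  rw [Real.circleAverage_eq_intervalAverage, Real.circleAverage_eq_intervalAverage]
  refine ((convexOn_norm convex_univ).pow (fun _ _ => norm_nonneg _) 2).map_set_average_le
    (by fun_prop) isClosed_univ ?_ ?_ (ae_of_all _ fun _ => mem_univ _) ?_ ?_
  · simp
  · simp [ENNReal.mul_eq_top]
  · exact h_cont.integrableOn_uIoc
  · exact (h_cont.norm.pow 2).integrableOn_uIoc

theorem differentiableOn_of_eq_zpow_mul_exp (hr : 0 ≤ r) {f u : ℂ → ℂ} {k : ℤ}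
    (hu : DifferentiableOn ℂ u (annulus r R)) (h_eq : ∀ z ∈ annulus r R, f z = z ^ k * exp (u z)) :
    DifferentiableOn ℂ f (annulus r R) :=
  DifferentiableOn.congr (fun z hz => (differentiableAt_zpow.2
    (.inl (ne_zero_of_mem_annulus hr hz))).differentiableWithinAt.mul (hu z hz).cexp) h_eq

theorem ne_zero_of_eq_zpow_mul_exp {z w c : ℂ} {k : ℤ} (hz : z ≠ 0) (h_eq : c = z ^ k * exp w) :
    c ≠ 0 :=
  h_eq ▸ mul_ne_zero (zpow_ne_zero k hz) (exp_ne_zero w)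

theorem sq_exponent_le_sq_mul_circleAverage (hr : 0 ≤ r) {f u : ℂ → ℂ} {k : ℤ}
    (hu : DifferentiableOn ℂ u (annulus r R)) (h_eq : ∀ z ∈ annulus r R, f z = z ^ k * exp (u z))
    (h_cont : ContinuousOn (logDeriv f) (annulus r R)) {ρ : ℝ} (hρ : ρ ∈ Ioo r R) :
    (k : ℝ) ^ 2 ≤ ρ ^ 2 * Real.circleAverage (fun z => ‖logDeriv f z‖ ^ 2) 0 ρ := by
  have h_abs : |ρ| = ρ := abs_of_pos (hr.trans_lt hρ.1)
  have h_norm : ∀ z ∈ sphere (0 : ℂ) |ρ|,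
      ‖z * logDeriv f z‖ ^ 2 = ρ ^ 2 * ‖logDeriv f z‖ ^ 2 := fun z hz => by
    rw [norm_mul, mul_pow, mem_sphere_zero_iff_norm.1 hz, sq_abs]
  calc (k : ℝ) ^ 2 = ‖Real.circleAverage (fun z => z * logDeriv f z) 0 ρ‖ ^ 2 := by
        rw [circleAverage_mul_logDeriv_eq hr hu h_eq hρ, norm_intCast, sq_abs]
    _ ≤ Real.circleAverage (fun z => ‖z * logDeriv f z‖ ^ 2) 0 ρ :=
        norm_circleAverage_sq_le ((continuousOn_id.mul h_cont).mono
          (h_abs.symm ▸ sphere_subset_annulus hρ))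
    _ = ρ ^ 2 * Real.circleAverage (fun z => ‖logDeriv f z‖ ^ 2) 0 ρ := by
        rw [Real.circleAverage_congr_sphere h_norm]
        exact Real.circleAverage_fun_smul (a := ρ ^ 2) (f := fun z => ‖logDeriv f z‖ ^ 2)

theorem lintegral_const_div_Ioo (hr : 0 < r) (hrR : r ≤ R) {c : ℝ} (hc : 0 ≤ c) :
    ∫⁻ ρ in Ioo r R, ENNReal.ofReal (c / ρ) = ENNReal.ofReal (c * Real.log (R / r)) := by
  have h_zero : (0 : ℝ) ∉ uIcc r R := by
    rw [uIcc_of_le hrR]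
    exact fun h => hr.not_ge h.1
  have h_int : IntervalIntegrable (fun ρ => c / ρ) volume r R := by
    simpa only [div_eq_mul_inv] using
      (intervalIntegral.intervalIntegrable_inv (fun ρ hρ => ne_of_mem_of_not_mem hρ h_zero)
        continuousOn_id).const_mul c
  have h_nonneg : ∀ᵐ ρ ∂volume.restrict (Ioo r R), 0 ≤ c / ρ :=
    ae_restrict_of_forall_mem measurableSet_Ioo fun ρ hρ => div_nonneg hc (hr.trans hρ.1).le
  rw [← ofReal_integral_eq_lintegral_ofReal (h_int.1.mono_set Ioo_subset_Ioc_self) h_nonneg,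
    ← integral_Ioc_eq_integral_Ioo, ← intervalIntegral.integral_of_le hrR]
  simp only [div_eq_mul_inv c]
  rw [intervalIntegral.integral_const_mul, integral_inv h_zero]

/- Length-area: on each circle the winding number bounds the mean of `‖logDeriv f‖²` from below. -/
theorem ofReal_log_div_le_lintegral_norm_logDeriv_sq (hr : 0 < r) (hrR : r ≤ R) {f u : ℂ → ℂ}
    {k : ℤ} (hu : DifferentiableOn ℂ u (annulus r R))
    (h_eq : ∀ z ∈ annulus r R, f z = z ^ k * exp (u z)) :
    ENNReal.ofReal (2 * Real.pi * k ^ 2 * Real.log (R / r)) ≤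
      ∫⁻ z in annulus r R, ENNReal.ofReal (‖logDeriv f z‖ ^ 2) := by
  have hf := differentiableOn_of_eq_zpow_mul_exp hr.le hu h_eq
  have h_cont : ContinuousOn (logDeriv f) (annulus r R) :=
    (hf.deriv isOpen_annulus).continuousOn.div hf.continuousOn fun z hz =>
      ne_zero_of_eq_zpow_mul_exp (ne_zero_of_mem_annulus hr.le hz) (h_eq z hz)
  have h_cont_sq : ContinuousOn (fun z => ‖logDeriv f z‖ ^ 2) (annulus r R) := h_cont.norm.pow 2
  rw [← lintegral_const_div_Ioo hr hrR (by positivity),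
    lintegral_annulus_eq_lintegral_circleMap hr.le (F := fun z => ENNReal.ofReal _)
      (ENNReal.continuous_ofReal.comp_continuousOn h_cont_sq)]
  refine setLIntegral_mono' measurableSet_Ioo fun ρ hρ => ?_
  have hρ0 : 0 < ρ := hr.trans hρ.1
  rw [← ofReal_two_pi_mul_circleAverage
      (circleIntegrable_of_continuousOn_annulus hr.le h_cont_sq hρ) fun _ => sq_nonneg _,
    ← ENNReal.ofReal_mul hρ0.le]
  refine ENNReal.ofReal_le_ofReal ((div_le_iff₀ hρ0).2 ?_)
  have := sq_exponent_le_sq_mul_circleAverage hr.le hu h_eq h_cont hρ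
  nlinarith [Real.pi_pos]

theorem cosh_add_sinh_mul_sub_le (s t : ℝ) :
    Real.cosh t + Real.sinh t * (s - t) ≤ Real.cosh s := by
  have h_eq : Real.cosh s - (Real.cosh t + Real.sinh t * (s - t)) =
      (Real.exp t * (Real.exp (s - t) - (s - t + 1)) +
        Real.exp (-t) * (Real.exp (-(s - t)) - (-(s - t) + 1))) / 2 := by
    have h_pos : Real.exp t * Real.exp (s - t) = Real.exp s := by rw [← Real.exp_add]; ring_nf
    have h_neg : Real.exp (-t) * Real.exp (-(s - t)) = Real.exp (-s) := by
      rw [← Real.exp_add]; ring_nf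
    rw [Real.cosh_eq, Real.cosh_eq, Real.sinh_eq, ← h_pos, ← h_neg]
    ring
  have := mul_nonneg (Real.exp_pos t).le (sub_nonneg.2 (Real.add_one_le_exp (s - t)))
  have := mul_nonneg (Real.exp_pos (-t)).le (sub_nonneg.2 (Real.add_one_le_exp (-(s - t))))
  linarith

theorem cos_im (ζ : ℂ) : (cos ζ).im = -(Real.sin ζ.re * Real.sinh ζ.im) := by
  rw [cos_eq, ← ofReal_cos, ← ofReal_sin, ← ofReal_cosh, ← ofReal_sinh]
  simp only [sub_im, mul_re, ofReal_re, ofReal_im, I_re, I_im, mul_im]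
  ring

theorem two_mul_norm_cos_sq (ζ : ℂ) :
    2 * ‖cos ζ‖ ^ 2 = Real.cos (2 * ζ.re) + Real.cosh (2 * ζ.im) := by
  have h_re : (cos ζ).re = Real.cos ζ.re * Real.cosh ζ.im := by
    rw [cos_eq, ← ofReal_cos, ← ofReal_sin, ← ofReal_cosh, ← ofReal_sinh]
    simp only [sub_re, mul_re, ofReal_re, ofReal_im, I_re, I_im, mul_im]
    ring
  rw [← normSq_eq_norm_sq, normSq_apply, h_re, cos_im, Real.cos_two_mul,
    Real.cosh_two_mul]
  linear_combination (2 * Real.sinh ζ.im ^ 2) * Real.sin_sq_add_cos_sq ζ.re +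
    (2 * Real.cos ζ.re ^ 2 - 1) * Real.cosh_sq ζ.im

theorem two_mul_abs_im_lt_of_norm_cos_sq_lt {T : ℝ} (hT : 0 < T) {ζ : ℂ}
    (h : 2 * ‖cos ζ‖ ^ 2 < Real.cosh T) :
    2 * |ζ.im| < T - Real.cos (2 * ζ.re) / Real.sinh T := by
  have h_sinh : 0 < Real.sinh T := Real.sinh_pos_iff.2 hT
  have h_tangent := cosh_add_sinh_mul_sub_le (2 * |ζ.im|) T
  have h_abs : Real.cosh (2 * |ζ.im|) = Real.cosh (2 * ζ.im) := by
    rw [← Real.cosh_abs (2 * ζ.im), abs_mul, abs_two]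
  rw [two_mul_norm_cos_sq] at h
  rw [lt_sub_comm, div_lt_iff₀ h_sinh]
  linarith

theorem injOn_cos_strip : InjOn cos {ζ | ζ.re ∈ Ioo 0 Real.pi} := by
  intro ζ hζ ξ hξ h
  simp only [mem_ofPred_eq, mem_Ioo] at hζ hξ
  obtain ⟨k, rfl | rfl⟩ := cos_eq_cos_iff.1 h
  · have h_re : (2 * k * Real.pi + ζ : ℂ).re = 2 * k * Real.pi + ζ.re := by simp
    rw [h_re] at hξ
    have h_gt : (-1 : ℝ) < k := by nlinarith [Real.pi_pos]
    have h_lt : (k : ℝ) < 1 := by nlinarith [Real.pi_pos]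
    obtain rfl : k = 0 := by norm_cast at h_gt h_lt; omega
    simp
  · have h_re : (2 * k * Real.pi - ζ : ℂ).re = 2 * k * Real.pi - ζ.re := by simp
    rw [h_re] at hξ
    have h_gt : (0 : ℝ) < k := by nlinarith [Real.pi_pos]
    have h_lt : (k : ℝ) < 1 := by nlinarith [Real.pi_pos]
    norm_cast at h_gt h_lt
    omega

theorem exists_cos_eq_of_im_ne_zero {w : ℂ} (hw : w.im ≠ 0) :
    ∃ ζ : ℂ, ζ.re ∈ Ioo 0 Real.pi ∧ cos ζ = w := by
  obtain ⟨ξ, rfl⟩ := cos_surjective w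
  obtain ⟨n, ⟨h_gt, h_le⟩, -⟩ := existsUnique_add_zsmul_mem_Ioc Real.two_pi_pos ξ.re (-Real.pi)
  obtain ⟨η, h_re, h_cos⟩ : ∃ η : ℂ, η.re = ξ.re + n • (2 * Real.pi) ∧ cos η = cos ξ :=
    ⟨ξ + n * (2 * Real.pi), by simp, cos_add_int_mul_two_pi ξ n⟩
  rw [← h_cos] at hw ⊢
  have h_sin : Real.sin η.re ≠ 0 := fun h => hw (by rw [cos_im, h, zero_mul, neg_zero])
  have h_pi : η.re ≠ Real.pi := fun h => h_sin (by rw [h, Real.sin_pi])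
  rw [← h_re] at h_gt h_le
  rcases lt_trichotomy η.re 0 with h | h | h
  · exact ⟨-η, ⟨neg_pos.2 h, by rw [neg_re]; linarith⟩, cos_neg η⟩
  · exact absurd (by rw [h, Real.sin_zero]) h_sin
  · exact ⟨η, ⟨h, lt_of_le_of_ne (by linarith) h_pi⟩, rfl⟩

/-- A region on which `cos` is injective; up to a null set, its image contains the disc of radius
`√(cosh T / 2)`. The bound on `ζ.im` comes from replacing `cosh` by its tangent line at `T`, which
makes the area exactly `π * T`. -/
def cosRegion (T : ℝ) : Set ℂ :=
  {ζ | ζ.re ∈ Ioo 0 Real.pi ∧ 2 * |ζ.im| < T - Real.cos (2 * ζ.re) / Real.sinh T}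

theorem isOpen_cosRegion {T : ℝ} : IsOpen (cosRegion T) :=
  (isOpen_Ioo.preimage continuous_re).inter <|
    isOpen_lt (f := fun ζ : ℂ => 2 * |ζ.im|)
      (g := fun ζ : ℂ => T - Real.cos (2 * ζ.re) / Real.sinh T) (by fun_prop) (by fun_prop)

theorem cos_two_mul_div_sinh_lt {T : ℝ} (hT : 0 < T) (hT' : 2 < Real.cosh T) (x : ℝ) :
    Real.cos (2 * x) / Real.sinh T < T := by
  have h_norm : 2 * ‖cos (x : ℂ)‖ ^ 2 < Real.cosh T := by
    rw [← ofReal_cos, norm_real, Real.norm_eq_abs, sq_abs]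
    linarith [Real.cos_sq_le_one x]
  simpa using two_mul_abs_im_lt_of_norm_cos_sq_lt hT h_norm

theorem volume_cosRegion {T : ℝ} (hT : 0 < T) (hT' : 2 < Real.cosh T) :
    volume (cosRegion T) = ENNReal.ofReal (Real.pi * T) := by
  set b : ℝ → ℝ := fun x => (T - Real.cos (2 * x) / Real.sinh T) / 2 with hb
  have hb_nonneg (x : ℝ) : 0 ≤ b x :=
    div_nonneg (sub_nonneg.2 (cos_two_mul_div_sinh_lt hT hT' x).le) zero_le_two
  have h_eq : cosRegion T = measurableEquivRealProd ⁻¹' regionBetween (-b) b (Ioo 0 Real.pi) := by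
    ext ζ
    simp only [cosRegion, regionBetween, mem_preimage, mem_ofPred_eq, measurableEquivRealProd_apply,
      Pi.neg_apply, hb]
    exact and_congr_right fun _ => by rw [mem_Ioo, ← abs_lt, lt_div_iff₀' (zero_lt_two' ℝ)]
  have h_int : IntegrableOn b (Ioo 0 Real.pi) :=
    (by fun_prop : Continuous b).integrableOn_Icc.mono_set Ioo_subset_Icc_self
  have h_sub (x : ℝ) : (b - -b) x = T - (Real.sinh T)⁻¹ * Real.cos (2 * x) := by
    simp only [Pi.sub_apply, Pi.neg_apply, hb]
    ring
  rw [h_eq, volume_preserving_equiv_real_prod.measure_preimage_equiv, Measure.volume_eq_prod,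
    volume_regionBetween_eq_integral h_int.neg h_int measurableSet_Ioo
      fun x _ => neg_le_self (hb_nonneg x),
    ← integral_Ioc_eq_integral_Ioo, ← intervalIntegral.integral_of_le Real.pi_pos.le]
  simp only [h_sub]
  rw [intervalIntegral.integral_sub (by simp) (Continuous.intervalIntegrable (by fun_prop) _ _),
    intervalIntegral.integral_const_mul,
    intervalIntegral.integral_comp_mul_left (fun x => Real.cos x) two_ne_zero]
  simp

theorem volume_im_div_eq_zero {a : ℂ} (ha : a ≠ 0) : volume {w : ℂ | (w / a).im = 0} = 0 := by
  have h_ker : {w : ℂ | (w / a).im = 0} =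
      (imLm ∘ₗ LinearMap.mulRight ℝ a⁻¹).ker := by
    ext w
    simp [div_eq_mul_inv]
  rw [h_ker]
  refine Measure.addHaar_submodule _ _ fun h => ?_
  have h_mem : a * I ∈ (imLm ∘ₗ LinearMap.mulRight ℝ a⁻¹).ker := by
    rw [h]
    trivial
  rw [LinearMap.mem_ker, LinearMap.comp_apply, LinearMap.mulRight_apply, mul_right_comm,
    mul_inv_cancel₀ ha, one_mul, imLm_coe, I_im] at h_mem
  exact one_ne_zero h_mem

theorem ball_subset_image_cosRegion_union {a : ℂ} (ha : a ≠ 0) {T : ℝ} (hT : 0 < T)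
    (h_cosh : Real.cosh T = 2 / ‖a‖ ^ 2) :
    ball 0 1 ⊆ (fun ζ => a * cos ζ) '' cosRegion T ∪ {w | (w / a).im = 0} := by
  intro w hw
  by_cases him : (w / a).im = 0
  · exact .inr him
  obtain ⟨ζ, h_re, h_cos⟩ := exists_cos_eq_of_im_ne_zero him
  refine .inl ⟨ζ, ⟨h_re, two_mul_abs_im_lt_of_norm_cos_sq_lt hT ?_⟩, ?_⟩
  · have := pow_lt_one₀ (norm_nonneg w) (mem_ball_zero_iff.1 hw) two_ne_zero
    have := norm_pos_iff.2 ha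
    rw [h_cosh, h_cos, norm_div, div_pow, ← mul_div_assoc]
    gcongr
    linarith
  · simp only [h_cos, mul_div_cancel₀ w ha]

theorem norm_deriv_sq_mul_inv_le_one (a ζ : ℂ) :
    ‖deriv (fun ζ => a * cos ζ) ζ‖ ^ 2 * ‖(a * cos ζ) ^ 2 - a ^ 2‖⁻¹ ≤ 1 := by
  have h_eq : (a * cos ζ) ^ 2 - a ^ 2 = -deriv (fun ζ => a * cos ζ) ζ ^ 2 := by
    rw [deriv_const_mul_field, Complex.deriv_cos]
    linear_combination a ^ 2 * sin_sq_add_cos_sq ζ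
  rw [h_eq, norm_neg, norm_pow]
  exact mul_inv_le_one

theorem lintegral_ball_inv_norm_sq_sub_sq_le {a : ℂ} (ha : a ≠ 0) (ha1 : ‖a‖ < 1) :
    ∫⁻ w in ball 0 1, ENNReal.ofReal ‖w ^ 2 - a ^ 2‖⁻¹ ≤
      ENNReal.ofReal (2 * Real.pi * Real.log (2 / ‖a‖)) := by
  have ha_pos : 0 < ‖a‖ := norm_pos_iff.2 ha
  have h_two : 2 < 2 / ‖a‖ ^ 2 :=
    lt_div_iff₀ (by positivity) |>.2 (by linarith [pow_lt_one₀ ha_pos.le ha1 two_ne_zero])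
  set T := Real.arcosh (2 / ‖a‖ ^ 2)
  have hT : 0 < T := Real.arcosh_pos (by linarith)
  have h_cosh : Real.cosh T = 2 / ‖a‖ ^ 2 := Real.cosh_arcosh (by linarith)
  have hT_le : T ≤ 2 * Real.log (2 / ‖a‖) := by
    have h_exp : Real.exp T ≤ (2 / ‖a‖) ^ 2 := calc
      Real.exp T ≤ 2 * Real.cosh T := by linarith [Real.cosh_eq T, Real.exp_pos (-T)]
      _ = (2 / ‖a‖) ^ 2 := by rw [h_cosh]; ring
    rwa [← Real.le_log_iff_exp_le (by positivity), Real.log_pow, Nat.cast_ofNat] at h_exp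
  have h_inj : InjOn (fun ζ => a * cos ζ) (cosRegion T) := fun ζ hζ ξ hξ h =>
    injOn_cos_strip hζ.1 hξ.1 (mul_left_cancel₀ ha h)
  calc ∫⁻ w in ball 0 1, ENNReal.ofReal ‖w ^ 2 - a ^ 2‖⁻¹
      ≤ ∫⁻ w in (fun ζ => a * cos ζ) '' cosRegion T ∪ {w | (w / a).im = 0},
          ENNReal.ofReal ‖w ^ 2 - a ^ 2‖⁻¹ :=
        lintegral_mono_set (ball_subset_image_cosRegion_union ha hT h_cosh)
    _ ≤ ∫⁻ w in (fun ζ => a * cos ζ) '' cosRegion T, ENNReal.ofReal ‖w ^ 2 - a ^ 2‖⁻¹ := by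
        refine (lintegral_union_le _ _ _).trans_eq ?_
        rw [setLIntegral_measure_zero _ _ (volume_im_div_eq_zero ha), add_zero]
    _ ≤ ∫⁻ _ in cosRegion T, 1 := by
        rw [lintegral_image_eq_lintegral_norm_deriv_sq_mul isOpen_cosRegion
          ((differentiable_cos.const_mul a).differentiableOn) h_inj]
        refine lintegral_mono fun _ => ?_
        rw [← ENNReal.ofReal_mul (sq_nonneg _)]
        exact ENNReal.ofReal_le_one.2 (norm_deriv_sq_mul_inv_le_one a _)
    _ ≤ ENNReal.ofReal (2 * Real.pi * Real.log (2 / ‖a‖)) := by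
        rw [setLIntegral_one, volume_cosRegion hT (h_cosh ▸ h_two)]
        exact ENNReal.ofReal_le_ofReal (by nlinarith [Real.pi_pos])

/-! ### Omitted values -/

theorem exponent_sq_mul_log_le (hr : 0 < r) (hrR : r ≤ R) {a : ℂ} (ha : a ≠ 0) (ha1 : ‖a‖ < 1)
    {G h u : ℂ → ℂ} {k : ℤ} (hG : DifferentiableOn ℂ G (annulus r R))
    (hG_inj : InjOn G (annulus r R)) (hG_lt : ∀ z ∈ annulus r R, ‖G z‖ < 1)
    (hG_ne : ∀ z ∈ annulus r R, G z ^ 2 ≠ a ^ 2) (hu : DifferentiableOn ℂ u (annulus r R))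
    (h_eq : ∀ z ∈ annulus r R, h z = z ^ k * exp (u z))
    (h_lift : ∀ z ∈ annulus r R, h z + (h z)⁻¹ = 2 * (G z / a)) :
    k ^ 2 * Real.log (R / r) ≤ Real.log (2 / ‖a‖) := by
  have hh := differentiableOn_of_eq_zpow_mul_exp hr.le hu h_eq
  have h_log : ∀ z ∈ annulus r R,
      ‖logDeriv h z‖ ^ 2 = ‖deriv G z‖ ^ 2 * ‖G z ^ 2 - a ^ 2‖⁻¹ := fun z hz => by
    have h_nhds := isOpen_annulus.mem_nhds hz
    have h_sq := sq_logDeriv_mul_of_add_inv_eq (P := fun z => G z / a) (hh.differentiableAt h_nhds)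
      (ne_zero_of_eq_zpow_mul_exp (ne_zero_of_mem_annulus hr.le hz) (h_eq z hz))
      (eventually_of_mem h_nhds h_lift)
    rw [deriv_div_const] at h_sq
    have h_mul : logDeriv h z ^ 2 * (G z ^ 2 - a ^ 2) = deriv G z ^ 2 := by
      field_simp at h_sq
      exact h_sq
    rw [eq_mul_inv_iff_mul_eq₀ (norm_ne_zero_iff.2 (sub_ne_zero.2 (hG_ne z hz))), ← norm_pow,
      ← norm_mul, h_mul, norm_pow]
  have h_area : ENNReal.ofReal (2 * Real.pi * k ^ 2 * Real.log (R / r)) ≤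
      ENNReal.ofReal (2 * Real.pi * Real.log (2 / ‖a‖)) := calc
    _ ≤ ∫⁻ z in annulus r R, ENNReal.ofReal (‖logDeriv h z‖ ^ 2) :=
      ofReal_log_div_le_lintegral_norm_logDeriv_sq hr hrR hu h_eq
    _ = ∫⁻ z in annulus r R,
        ENNReal.ofReal (‖deriv G z‖ ^ 2) * ENNReal.ofReal ‖G z ^ 2 - a ^ 2‖⁻¹ :=
      setLIntegral_congr_fun isOpen_annulus.measurableSet fun z hz => by
        simp only [h_log z hz, ENNReal.ofReal_mul (sq_nonneg ‖deriv G z‖)]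
    _ = ∫⁻ w in G '' annulus r R, ENNReal.ofReal ‖w ^ 2 - a ^ 2‖⁻¹ :=
      (lintegral_image_eq_lintegral_norm_deriv_sq_mul isOpen_annulus hG hG_inj
        fun w => ENNReal.ofReal ‖w ^ 2 - a ^ 2‖⁻¹).symm
    _ ≤ ∫⁻ w in ball 0 1, ENNReal.ofReal ‖w ^ 2 - a ^ 2‖⁻¹ :=
      lintegral_mono_set (image_subset_iff.2 fun z hz => mem_ball_zero_iff.2 (hG_lt z hz))
    _ ≤ _ := lintegral_ball_inv_norm_sq_sub_sq_le ha ha1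
  have h_pos : 0 < Real.log (2 / ‖a‖) :=
    Real.log_pos ((one_lt_div (norm_pos_iff.2 ha)).2 (by linarith))
  rw [ENNReal.ofReal_le_ofReal_iff (mul_pos Real.two_pi_pos h_pos).le, mul_assoc] at h_area
  exact le_of_mul_le_mul_left h_area Real.two_pi_pos

theorem exists_discAutomorphism_eq_self {w : ℂ} (hw0 : w ≠ 0) (hw1 : ‖w‖ < 1) :
    ∃ a : ℂ, a ≠ 0 ∧ ‖a‖ < 1 ∧ discAutomorphism a w = a ∧ ‖w‖ = 2 * ‖a‖ / (1 + ‖a‖ ^ 2) := by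
  set c : ℝ := 1 + √(1 - ‖w‖ ^ 2)
  have hc : 1 ≤ c := le_add_of_nonneg_right (Real.sqrt_nonneg _)
  have hc0 : c ≠ 0 := by positivity
  have h_quad : c ^ 2 + ‖w‖ ^ 2 = 2 * c := by
    have := Real.sq_sqrt (sub_nonneg.2 (pow_le_one₀ (norm_nonneg w) hw1.le (n := 2)))
    linear_combination this
  have h_norm : ‖w / c‖ = ‖w‖ / c := by
    rw [norm_div, norm_real, Real.norm_eq_abs, abs_of_pos (by linarith)]
  have h_lt : ‖w / c‖ < 1 := by
    rw [h_norm, div_lt_one (by linarith)]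
    linarith
  refine ⟨w / c, div_ne_zero hw0 (ofReal_ne_zero.2 hc0), h_lt, ?_, ?_⟩
  · rw [discAutomorphism, div_eq_iff (one_sub_conj_mul_ne_zero h_lt hw1), map_div₀, conj_ofReal]
    have h_conj : conj w * w = ‖w‖ ^ 2 := conj_mul' w
    have h_quad' : (c : ℂ) ^ 2 + ‖w‖ ^ 2 = 2 * c := mod_cast h_quad
    have hc0' : (c : ℂ) ≠ 0 := ofReal_ne_zero.2 hc0
    field_simp
    linear_combination h_quad' + h_conj
  · rw [h_norm]
    field_simp
    rw [h_quad]

theorem discAutomorphism_add {a z : ℂ} (ha : ‖a‖ < 1) (hz : ‖z‖ < 1) :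
    discAutomorphism a z + a = (1 - ‖a‖ ^ 2) * z / (1 - conj a * z) := by
  rw [discAutomorphism, div_add' _ _ _ (one_sub_conj_mul_ne_zero ha hz)]
  congr 1
  linear_combination -z * conj_mul' a

theorem exists_discAutomorphism_div_add_one_eq_zpow_mul_exp {a : ℂ} (ha : a ≠ 0) (ha1 : ‖a‖ < 1)
    {f g : ℂ → ℂ} {k : ℤ} (hg : DifferentiableOn ℂ g (annulus r R))
    (hf : DifferentiableOn ℂ f (annulus r R)) (hf_lt : ∀ z ∈ annulus r R, ‖f z‖ < 1)
    (h_eq : ∀ z ∈ annulus r R, f z = z ^ k * exp (g z)) :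
    ∃ u : ℂ → ℂ, DifferentiableOn ℂ u (annulus r R) ∧
      ∀ z ∈ annulus r R, discAutomorphism a (f z) / a + 1 = z ^ k * exp (u z) := by
  have h_slit : ∀ z ∈ annulus r R, 1 - conj a * f z ∈ slitPlane := fun z hz =>
    .inl (re_one_sub_conj_mul_pos ha1 (hf_lt z hz))
  have h_ne : ((1 - ‖a‖ ^ 2) / a : ℂ) ≠ 0 := by
    refine div_ne_zero ?_ ha
    exact mod_cast (sub_pos.2 (pow_lt_one₀ (norm_nonneg a) ha1 two_ne_zero)).ne'
  refine ⟨fun z => g z + log ((1 - ‖a‖ ^ 2) / a) - log (1 - conj a * f z),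
    (hg.add_const _).sub (((hf.const_mul _).const_sub 1).clog h_slit), fun z hz => ?_⟩
  have h_sub := slitPlane_ne_zero (h_slit z hz)
  rw [exp_sub, exp_add, exp_log h_ne, exp_log h_sub, div_add_one ha,
    discAutomorphism_add ha1 (hf_lt z hz), h_eq z hz]
  ring

theorem two_mul_div_one_add_sq_le_max {t : ℝ} (ht0 : 0 ≤ t) (ht1 : t ≤ 1) (ht : t ≤ 2 * r) :
    2 * t / (1 + t ^ 2) ≤ max (2 * r) (4 * r / (1 + 4 * r ^ 2)) := by
  rcases le_total (2 * r) 1 with h | h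
  · refine le_max_of_le_right ((div_le_div_iff₀ (by positivity) (by positivity)).2 ?_)
    have h_prod : t * (2 * r) ≤ 1 := mul_le_one₀ ht1 (ht0.trans ht) h
    nlinarith [mul_nonneg (sub_nonneg.2 ht) (sub_nonneg.2 h_prod)]
  · refine le_max_of_le_left (((div_le_one (by positivity)).2 ?_).trans h)
    linarith [sq_nonneg (1 - t)]

theorem norm_le_two_mul_of_div_add_one_eq_zpow_mul_exp (hr : 0 < r) (hrR : r < R) {a : ℂ}
    (ha : a ≠ 0) (ha1 : ‖a‖ < 1) {G u : ℂ → ℂ} {k : ℤ} (hk : k ≠ 0)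
    (hG : DifferentiableOn ℂ G (annulus r R)) (hG_inj : InjOn G (annulus r R))
    (hG_lt : ∀ z ∈ annulus r R, ‖G z‖ < 1) (hG_ne : ∀ z ∈ annulus r R, G z ≠ a)
    (hG_lim : Tendsto (fun z => ‖G z‖) (comap norm (𝓝[<] R)) (𝓝 1))
    (hu : DifferentiableOn ℂ u (annulus r R))
    (h_eq : ∀ z ∈ annulus r R, G z / a + 1 = z ^ k * exp (u z)) : ‖a‖ ≤ 2 * (r / R) := by
  have hR : 0 < R := hr.trans hrR
  have h_add_ne : ∀ z ∈ annulus r R, G z / a + 1 ≠ 0 := fun z hz =>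
    ne_zero_of_eq_zpow_mul_exp (ne_zero_of_mem_annulus hr.le hz) (h_eq z hz)
  have h_outer : ∀ᶠ z in comap norm (𝓝[<] R), 1 < ‖G z / a‖ := by
    filter_upwards [hG_lim.eventually (lt_mem_nhds ha1)] with z hz
    rwa [norm_div, one_lt_div (norm_pos_iff.2 ha)]
  obtain ⟨v, hv, h_lift⟩ := exists_joukowski_lift hr.le hrR (hG.div_const a)
    (fun z hz h => hG_ne z hz ((div_eq_one_iff_eq ha).1 h))
    (fun z hz h => h_add_ne z hz (by rw [h, neg_add_cancel])) h_outer
  have h_sq_ne : ∀ z ∈ annulus r R, G z ^ 2 ≠ a ^ 2 := fun z hz h => by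
    rcases sq_eq_sq_iff_eq_or_eq_neg.1 h with h | h
    · exact hG_ne z hz h
    · exact h_add_ne z hz (by rw [h, neg_div, div_self ha, neg_add_cancel])
  have h_exponent : k ^ 2 * Real.log (R / r) ≤ Real.log (2 / ‖a‖) :=
    exponent_sq_mul_log_le hr hrR.le ha ha1 hG hG_inj hG_lt h_sq_ne (hu.add hv)
      (fun z hz => by rw [h_eq z hz, mul_assoc, Pi.add_apply, exp_add]) h_lift
  have hk_sq : (1 : ℝ) ≤ k ^ 2 := mod_cast (one_le_sq_iff_one_le_abs k).2 (Int.one_le_abs hk)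
  have h_log : Real.log (R / r) ≤ Real.log (2 / ‖a‖) :=
    (le_mul_of_one_le_left (Real.log_nonneg ((one_le_div hr).2 hrR.le)) hk_sq).trans h_exponent
  have h_div := (Real.log_le_log_iff (by positivity) (by positivity)).1 h_log
  rw [div_le_div_iff₀ hr (norm_pos_iff.2 ha)] at h_div
  rwa [← mul_div_assoc, le_div_iff₀' hR]

theorem norm_le_max_of_omitted (hr : 0 < r) (hr1 : r < 1) {f : ℂ → ℂ}
    (hf : DifferentiableOn ℂ f (annulus r 1)) (h_inj : InjOn f (annulus r 1))
    (h_lt : ∀ z ∈ annulus r 1, ‖f z‖ < 1) (h_ne : ∀ z ∈ annulus r 1, f z ≠ 0)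
    (h_lim : Tendsto (fun z => ‖f z‖) (comap norm (𝓝[<] 1)) (𝓝 1)) {w : ℂ} (hw0 : w ≠ 0)
    (hw1 : ‖w‖ < 1) (hw : ∀ z ∈ annulus r 1, f z ≠ w) :
    ‖w‖ ≤ max (2 * r) (4 * r / (1 + 4 * r ^ 2)) := by
  obtain ⟨a, ha, ha1, h_fix, h_norm⟩ := exists_discAutomorphism_eq_self hw0 hw1
  obtain ⟨k, g, hg, h_eq⟩ := exists_eq_zpow_mul_exp hr.le hf h_ne
  have hk : k ≠ 0 := exponent_ne_zero_of_tendsto_norm_one hr.le hr1 hg h_eq h_lt h_lim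
  obtain ⟨u, hu, hu_eq⟩ :=
    exists_discAutomorphism_div_add_one_eq_zpow_mul_exp ha ha1 hg hf h_lt h_eq
  have h_mem : ∀ z ∈ annulus r 1, f z ∈ ball 0 1 := fun z hz => mem_ball_zero_iff.2 (h_lt z hz)
  have h_diff : DifferentiableOn ℂ (fun z => discAutomorphism a (f z)) (annulus r 1) :=
    (hf.sub_const a).div ((hf.const_mul _).const_sub 1) fun z hz =>
      one_sub_conj_mul_ne_zero ha1 (h_lt z hz)
  have ha_le : ‖a‖ ≤ 2 * (r / 1) :=
    norm_le_two_mul_of_div_add_one_eq_zpow_mul_exp hr hr1 ha ha1 hk h_diff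
      ((injOn_discAutomorphism ha1).comp h_inj h_mem)
      (fun z hz => norm_discAutomorphism_lt_one ha1 (h_lt z hz))
      (fun z hz h => hw z hz <| injOn_discAutomorphism ha1 (h_mem z hz)
        (mem_ball_zero_iff.2 hw1) (h.trans h_fix.symm))
      (tendsto_norm_discAutomorphism ha1 ((eventually_mem_annulus_nhdsLT hr1).mono h_lt) h_lim)
      hu hu_eq
  rw [div_one] at ha_le
  rw [h_norm]
  exact two_mul_div_one_add_sq_le_max (norm_nonneg a) ha1.le ha_le

/-! ### Behaviour at the inner circle -/

theorem ne_of_mapClusterPt_of_injOn {U : Set ℂ} (hU : IsOpen U) {f : ℂ → ℂ}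
    (hf : DifferentiableOn ℂ f U) (h_inj : InjOn f U) {l : Filter ℂ} (hl : U ∈ l) {z w : ℂ}
    (hz : z ∈ U) (h_disj : Disjoint (𝓝 z) l) (hw : MapClusterPt w l f) : f z ≠ w := by
  rintro rfl
  have h_open : 𝓝 (f z) ≤ map f (𝓝 z) := by
    refine (hf.analyticAt (hU.mem_nhds hz)).eventually_constant_or_nhds_le_map_nhds.resolve_left
      fun h_const => ?_
    have h_eq : ∀ᶠ y in 𝓝[≠] z, y = z := eventually_nhdsWithin_of_eventually_nhds <| by
      filter_upwards [h_const, hU.mem_nhds hz] with y hy hyU using h_inj hyU hz hy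
    obtain ⟨y, hy, hy_ne⟩ := (h_eq.and eventually_mem_nhdsWithin).exists
    exact hy_ne hy
  obtain ⟨V, hV, W, hW, hVW⟩ := Filter.disjoint_iff.1 h_disj
  have h_image : f '' (U ∩ V) ∈ 𝓝 (f z) :=
    h_open (image_mem_map (inter_mem (hU.mem_nhds hz) hV))
  obtain ⟨y, ⟨x, ⟨hxU, hxV⟩, hxy⟩, hyU, hyW⟩ :=
    ((hw.frequently h_image).and_eventually (inter_mem hl hW)).exists
  exact disjoint_left.1 hVW (h_inj hxU hyU hxy ▸ hxV) hyW

theorem eventually_notMem_of_isCompact_of_subset_image {U : Set ℂ} (hU : IsOpen U) {f : ℂ → ℂ}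
    (hf : DifferentiableOn ℂ f U) (h_inj : InjOn f U) {l : Filter ℂ} (hl : U ∈ l)
    (h_disj : ∀ z ∈ U, Disjoint (𝓝 z) l) {K : Set ℂ} (hK : IsCompact K) (hKU : K ⊆ f '' U) :
    ∀ᶠ z in l, f z ∉ K := by
  by_contra h_freq
  obtain ⟨w, hwK, hw⟩ := hK.exists_mapClusterPt_of_frequently <| by
    simpa only [not_eventually, not_not] using h_freq
  obtain ⟨z, hz, hzw⟩ := hKU hwK
  exact ne_of_mapClusterPt_of_injOn hU hf h_inj hl hz (h_disj z hz) hw hzw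

theorem disjoint_nhds_comap_norm_nhdsGT {z : ℂ} (hz : r < ‖z‖) :
    Disjoint (𝓝 z) (comap norm (𝓝[>] r)) :=
  (continuous_norm.tendsto z).disjoint
    ((disjoint_nhds_nhds.2 hz.ne').mono_right nhdsWithin_le_nhds) tendsto_comap

theorem neBot_comap_norm_nhdsGT (hr : 0 ≤ r) : (comap (norm : ℂ → ℝ) (𝓝[>] r)).NeBot := by
  refine NeBot.comap_of_range_mem inferInstance ?_
  filter_upwards [self_mem_nhdsWithin] with t ht
  exact ⟨t, by rw [norm_real, Real.norm_of_nonneg (hr.trans ht.le)]⟩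

theorem le_norm_of_forall_mem_frontier_le_norm {U : Set ℂ} (hU : Bornology.IsBounded U)
    {f : ℂ → ℂ} (hf : DiffContOnCl ℂ f U) (hf0 : ∀ z ∈ closure U, f z ≠ 0) {d : ℝ}
    (h_frontier : ∀ z ∈ frontier U, d ≤ ‖f z‖) {z : ℂ} (hz : z ∈ closure U) : d ≤ ‖f z‖ := by
  rcases le_or_gt d 0 with hd | hd
  · exact hd.trans (norm_nonneg _)
  have h_inv := norm_le_of_forall_mem_frontier_norm_le hU (hf.inv hf0) (C := d⁻¹) (fun x hx => by
    rw [Pi.inv_apply, norm_inv]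
    exact inv_anti₀ hd (h_frontier x hx)) hz
  rw [Pi.inv_apply, norm_inv] at h_inv
  exact (inv_le_inv₀ (norm_pos_iff.2 (hf0 z hz)) hd).1 h_inv

theorem closure_annulus_subset : closure (annulus r R) ⊆ {z | r ≤ ‖z‖ ∧ ‖z‖ ≤ R} :=
  closure_minimal (fun _ hz => ⟨hz.1.le, hz.2.le⟩)
    ((isClosed_le continuous_const continuous_norm).inter
      (isClosed_le continuous_norm continuous_const))

theorem le_norm_of_eventually_le_norm {f : ℂ → ℂ} (hf : DifferentiableOn ℂ f (annulus r R))
    (hf0 : ∀ z ∈ annulus r R, f z ≠ 0) {d : ℝ}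
    (h_inner : ∀ᶠ z in comap norm (𝓝[>] r), d ≤ ‖f z‖)
    (h_outer : ∀ᶠ z in comap norm (𝓝[<] R), d ≤ ‖f z‖) {z : ℂ} (hz : z ∈ annulus r R) :
    d ≤ ‖f z‖ := by
  have hrR : r < R := hz.1.trans hz.2
  obtain ⟨ρ₁, hρ₁, h_inner⟩ := (eventually_comap_norm_nhdsGT_iff hrR).1 h_inner
  obtain ⟨ρ₂, hρ₂, h_outer⟩ := (eventually_comap_norm_nhdsLT_iff hrR).1 h_outer
  obtain ⟨r₁, hr₁, hr₁_lt⟩ := exists_between (lt_min hρ₁.1 hz.1)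
  obtain ⟨r₂, hr₂_lt, hr₂⟩ := exists_between (max_lt hρ₂.2 hz.2)
  rw [lt_min_iff] at hr₁_lt
  rw [max_lt_iff] at hr₂_lt
  have h_closure : closure (annulus r₁ r₂) ⊆ annulus r R := fun x hx =>
    ⟨hr₁.trans_le (closure_annulus_subset hx).1, (closure_annulus_subset hx).2.trans_lt hr₂⟩
  refine le_norm_of_forall_mem_frontier_le_norm
    (isBounded_ball.subset fun x hx => mem_ball_zero_iff.2 hx.2)
    (hf.mono h_closure).diffContOnCl (fun x hx => hf0 x (h_closure hx)) (fun x hx => ?_)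
    (subset_closure ⟨hr₁_lt.2, hr₂_lt.2⟩)
  rw [isOpen_annulus.frontier_eq] at hx
  have hx_mem := h_closure hx.1
  rcases (closure_annulus_subset hx.1).1.eq_or_lt with h_eq | h_lt
  · exact h_inner x ⟨hx_mem.1, h_eq ▸ hr₁_lt.1⟩
  · exact h_outer x ⟨hr₂_lt.1.trans_le (not_lt.1 fun h => hx.2 ⟨h_lt, h⟩), hx_mem.2⟩

theorem eventually_lt_or_eventually_gt_of_eventually_notMem_Icc (hr : 0 ≤ r) (hrR : r < R)
    {g : ℂ → ℝ} (hg : ContinuousOn g (annulus r R)) {c d : ℝ} (hcd : c ≤ d)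
    (h_notMem : ∀ᶠ z in comap norm (𝓝[>] r), g z ∉ Icc c d) :
    (∀ᶠ z in comap norm (𝓝[>] r), g z < c) ∨ ∀ᶠ z in comap norm (𝓝[>] r), d < g z := by
  obtain ⟨ρ, hρ, h_notMem⟩ := (eventually_comap_norm_nhdsGT_iff hrR).1 h_notMem
  by_cases h_lt : ∀ z ∈ annulus r ρ, g z < c
  · exact .inl ((eventually_comap_norm_nhdsGT_iff hrR).2 ⟨ρ, hρ, h_lt⟩)
  push Not at h_lt
  obtain ⟨x, hx, hcx⟩ := h_lt
  refine .inr ((eventually_comap_norm_nhdsGT_iff hrR).2 ⟨ρ, hρ, fun z hz => ?_⟩)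
  by_contra! hzd
  have hzc : g z < c := not_le.1 fun h => h_notMem z hz ⟨h, hzd⟩
  obtain ⟨y, hy, rfl⟩ := (isPreconnected_annulus hr).intermediate_value hz hx
    (hg.mono (annulus_subset_annulus le_rfl hρ.2)) ⟨hzc.le, hcx⟩
  exact h_notMem y hy ⟨le_rfl, hcd⟩

theorem eventually_norm_lt_of_annulus_subset_image (hr : 0 ≤ r) (hrR : r < R) {f : ℂ → ℂ}
    (hf : DifferentiableOn ℂ f (annulus r R)) (h_inj : InjOn f (annulus r R))
    (h_lt : ∀ z ∈ annulus r R, ‖f z‖ < 1) (h_ne : ∀ z ∈ annulus r R, f z ≠ 0)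
    (h_lim : Tendsto (fun z => ‖f z‖) (comap norm (𝓝[<] R)) (𝓝 1)) {b c : ℝ}
    (h_image : annulus b 1 ⊆ f '' annulus r R) (hbc : b < c) :
    ∀ᶠ z in comap norm (𝓝[>] r), ‖f z‖ < c := by
  have h_mem := eventually_mem_annulus_nhdsGT hrR
  rcases le_or_gt 1 c with hc | hc
  · exact h_mem.mono fun z hz => (h_lt z hz).trans_le hc
  have := neBot_comap_norm_nhdsGT hr
  obtain ⟨z₀, hz₀⟩ := h_mem.exists
  obtain ⟨d, hd, hd1⟩ := exists_between (max_lt hc (h_lt z₀ hz₀))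
  obtain ⟨hcd, hd⟩ := max_lt_iff.1 hd
  have hK : IsCompact {w : ℂ | ‖w‖ ∈ Icc c d} :=
    (isCompact_closedBall 0 d).of_isClosed_subset (isClosed_Icc.preimage continuous_norm)
      fun w hw => mem_closedBall_zero_iff.2 hw.2
  have h_notMem : ∀ᶠ z in comap norm (𝓝[>] r), ‖f z‖ ∉ Icc c d :=
    eventually_notMem_of_isCompact_of_subset_image isOpen_annulus hf h_inj h_mem
      (fun z hz => disjoint_nhds_comap_norm_nhdsGT hz.1) hK
      fun w hw => h_image ⟨hbc.trans_le hw.1, hw.2.trans_lt hd1⟩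
  refine (eventually_lt_or_eventually_gt_of_eventually_notMem_Icc hr hrR hf.continuousOn.norm
    hcd.le h_notMem).resolve_right fun h_gt => hd.not_ge ?_
  exact le_norm_of_eventually_le_norm hf h_ne (h_gt.mono fun _ => le_of_lt)
    (h_lim.eventually (le_mem_nhds hd1)) hz₀

theorem limsup_norm_le_of_annulus_subset_image (hr : 0 ≤ r) (hrR : r < R) {f : ℂ → ℂ}
    (hf : DifferentiableOn ℂ f (annulus r R)) (h_inj : InjOn f (annulus r R))
    (h_lt : ∀ z ∈ annulus r R, ‖f z‖ < 1) (h_ne : ∀ z ∈ annulus r R, f z ≠ 0)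
    (h_lim : Tendsto (fun z => ‖f z‖) (comap norm (𝓝[<] R)) (𝓝 1)) {b : ℝ}
    (h_image : annulus b 1 ⊆ f '' annulus r R) :
    limsup (fun z => ‖f z‖) (comap norm (𝓝[>] r)) ≤ b := by
  have := neBot_comap_norm_nhdsGT hr
  have h_cobdd : IsCoboundedUnder (· ≤ ·) (comap norm (𝓝[>] r)) fun z => ‖f z‖ :=
    (isBoundedUnder_of ⟨0, fun z => norm_nonneg (f z)⟩).isCoboundedUnder_le
  refine le_of_forall_gt_imp_ge_of_dense fun c hc => limsup_le_of_le h_cobdd ?_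
  exact (eventually_norm_lt_of_annulus_subset_image hr hrR hf h_inj h_lt h_ne h_lim h_image
    hc).mono fun _ => le_of_lt

theorem max_lt_four_mul (hr : 0 < r) : max (2 * r) (4 * r / (1 + 4 * r ^ 2)) < 4 * r :=
  max_lt (by linarith) (div_lt_self (by positivity) (by nlinarith [pow_pos hr 2]))

end

/-- The annulus lemma: a univalent analytic map of the annulus `A(r)` into the
punctured unit disk with unimodular boundary values on the unit circle satisfies
`limsup_{|z|→r} |f z| ≤ max (2r) (4r/(1+4r²)) < 4r`. -/
theorem annulus_lemma (r : ℝ) (hr : r ∈ Set.Ioo (0:ℝ) 1)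
    (A : Set ℂ) (hA : A = {z : ℂ | r < ‖z‖ ∧ ‖z‖ < 1})
    (f : ℂ → ℂ)
    (hf : DifferentiableOn ℂ f A)
    (hinj : Set.InjOn f A)
    (hlt : ∀ z ∈ A, ‖f z‖ < 1)
    (hne : ∀ z ∈ A, f z ≠ 0)
    (hbd : Tendsto (fun z => ‖f z‖) (Filter.principal A ⊓ Filter.comap (fun z : ℂ => ‖z‖) (nhds 1)) (nhds 1)) :
    Filter.limsup (fun z => ‖f z‖)
        (Filter.principal A ⊓ Filter.comap (fun z : ℂ => ‖z‖) (nhds r))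
      ≤ max (2 * r) (4 * r / (1 + 4 * r ^ 2)) ∧
    max (2 * r) (4 * r / (1 + 4 * r ^ 2)) < 4 * r := by
  obtain ⟨hr0, hr1⟩ := hr
  obtain rfl : A = annulus r 1 := hA
  rw [principal_annulus_inf_comap_nhds_right hr1] at hbd
  rw [principal_annulus_inf_comap_nhds_left hr1]
  refine ⟨limsup_norm_le_of_annulus_subset_image hr0.le hr1 hf hinj hlt hne hbd fun w hw => ?_,
    max_lt_four_mul hr0⟩
  have hw0 : w ≠ 0 := ne_zero_of_mem_annulus (le_max_of_le_left (by positivity)) hw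
  by_contra h_omitted
  exact hw.1.not_ge <| norm_le_max_of_omitted hr0 hr1 hf hinj hlt hne hbd hw0 hw.2
    fun z hz h_eq => h_omitted ⟨z, hz, h_eq⟩
end

section
/- L_n > 1/4^n for all n ≥ 2: for every finite Blaschke product B of degree n with B(0) = 0 and B'(0) ≠ 0, there exists a critical point ζ of B in the unit disk with |B(ζ)/(ζ B'(0))| > 1/4^n. -/
open Complex

/-!
Suppose `|B ζ| ≤ R` at every critical point `ζ`, and let `|B p| ≤ R`. Lower the height `t` at which
`0` and `p` can be joined inside `{|B| < t}`: at an infimum above `R` a critical point of height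
greater than `R` would appear (mountain pass), so `0` and `p` are joined below every height
exceeding `R`. Hence every circle `|w| = r` with `r ≤ |p|` contains a point where `|B| ≤ R`. There
`|B w| ≥ r ∏ |r - |z k||` (circular projection), so a monic real polynomial of degree `n` is bounded
by `R` on `[0, |p|]`, and Chebyshev's inequality gives `2 (|p| / 4) ^ n ≤ R`.

If moreover `|B ζ / (ζ B' 0)| ≤ c` at all critical points, let `d` be the supremum of the moduli of
the zeros and the critical points. As `|B' 0| = ∏ |z k|`, one may take `R = c d ^ n`, and letting
`|p|` approach `d` yields `c ≥ 2 / 4 ^ n`.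
-/

open Metric Set Topology
open scoped Complex.UnitDisc ComplexConjugate Polynomial

section MountainPass

variable {X : Type*} [TopologicalSpace X] {f g : X → ℝ} {x y : X} {R r s : ℝ}

/-- `q` is a regular point of `f` in the topological sense needed for the mountain pass argument:
arbitrarily small neighbourhoods of `q` meet the strict sublevel set of `f` at height `f q` in a
path-connected set. Path-connected sets being nonempty, `q` is then not a local minimum. -/
def IsRegularPoint (f : X → ℝ) (q : X) : Prop :=
  ∀ t ∈ 𝓝 q, ∃ N ∈ 𝓝 q, N ⊆ t ∧ IsPathConnected (N ∩ {w | f w < f q})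

theorem IsRegularPoint.mem_closure {q : X} (h : IsRegularPoint f q) :
    q ∈ closure {w | f w < f q} :=
  mem_closure_iff_nhds.2 fun t ht =>
    let ⟨_, _, hNt, hN⟩ := h t ht
    hN.nonempty.mono (inter_subset_inter_left _ hNt)

theorem disjoint_closure_pathComponentIn_closure_sdiff {U : Set X}
    (hU : ∀ q ∈ closure U, ∃ N ∈ 𝓝 q, IsPathConnected (N ∩ U)) (x : X) :
    Disjoint (closure (pathComponentIn U x)) (closure (U \ pathComponentIn U x)) := by
  refine disjoint_left.2 fun q hqV hqW => ?_
  obtain ⟨N, hN, hNU⟩ := hU q (closure_mono pathComponentIn_subset hqV)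
  obtain ⟨v, hvN, hv⟩ := mem_closure_iff_nhds.1 hqV N hN
  obtain ⟨w, hwN, hwU, hw⟩ := mem_closure_iff_nhds.1 hqW N hN
  have hvw : JoinedIn U v w :=
    (hNU.joinedIn v ⟨hvN, pathComponentIn_subset hv⟩ w ⟨hwN, hwU⟩).mono inter_subset_right
  exact hw (JoinedIn.trans hv hvw)

theorem exists_lt_joinedIn_setOf_lt (hf : Continuous f) (h : JoinedIn {w | f w < s} x y) :
    ∃ t < s, JoinedIn {w | f w < t} x y := by
  obtain ⟨γ, hγ⟩ := h
  obtain ⟨i, -, hi⟩ :=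
    isCompact_univ.exists_isMaxOn univ_nonempty (hf.comp γ.continuous).continuousOn
  obtain ⟨t, hit, hts⟩ := exists_between (show f (γ i) < s from hγ i)
  exact ⟨t, hts, γ, fun j => (hi (mem_univ j)).trans_lt hit⟩

theorem exists_le_and_eq_of_forall_joinedIn (hf : Continuous f)
    (hK : ∀ w, IsCompact {z | f z ≤ f w}) (h : ∀ t > s, JoinedIn {w | f w < t} x y)
    (hg : Continuous g) (hr : r ∈ Icc (g x) (g y)) : ∃ w, f w ≤ s ∧ g w = r := by
  have hcross : ∀ t > s, ∃ w, f w < t ∧ g w = r := fun t ht => by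
    obtain ⟨γ, hγ⟩ := h t ht
    obtain ⟨i, hi⟩ := intermediate_value_univ 0 1 (hg.comp γ.continuous) (by simpa using hr)
    exact ⟨γ i, hγ i, hi⟩
  obtain ⟨w₁, -, hw₁⟩ := hcross (s + 1) (lt_add_one s)
  obtain ⟨w, ⟨hww₁, hw⟩, hmin⟩ :=
    ((hK w₁).inter_right (isClosed_singleton.preimage hg)).exists_isMinOn
      ⟨w₁, le_refl (f w₁), hw₁⟩ hf.continuousOn
  refine ⟨w, le_of_forall_gt fun t ht => ?_, hw⟩
  obtain ⟨v, hvt, hv⟩ := hcross t ht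
  refine lt_of_le_of_lt ?_ hvt
  rcases le_total (f v) (f w₁) with hvw₁ | hw₁v
  · exact hmin ⟨hvw₁, hv⟩
  · exact hww₁.trans hw₁v

theorem exists_mem_nhds_isPathConnected_inter_setOf_lt [LocallyPathConnectedSpace X]
    (hf : Continuous f) (hreg : ∀ q, f q = s → IsRegularPoint f q) {q : X} (hq : f q ≤ s) :
    ∃ N ∈ 𝓝 q, IsPathConnected (N ∩ {w | f w < s}) := by
  rcases hq.lt_or_eq with hlt | rfl
  · obtain ⟨N, hN, hNc, hNs⟩ :=
      (pathConnected_subset_basis (isOpen_lt hf continuous_const) hlt).ex_mem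
    exact ⟨N, hN, by rwa [inter_eq_left.2 hNs]⟩
  · obtain ⟨N, hN, -, hNc⟩ := hreg q rfl univ Filter.univ_mem
    exact ⟨N, hN, hNc⟩

theorem joinedIn_setOf_lt_of_forall_gt [LocallyPathConnectedSpace X] [NormalSpace X]
    (hf : Continuous f) (hK : ∀ w, IsCompact {z | f z ≤ f w})
    (hreg : ∀ q, f q = s → IsRegularPoint f q) (hx : f x < s) (hy : f y < s)
    (h : ∀ t > s, JoinedIn {w | f w < t} x y) : JoinedIn {w | f w < s} x y := by
  by_contra hxy
  have hclosure : ∀ q ∈ closure {w | f w < s}, f q ≤ s := fun q hq =>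
    closure_lt_subset_le hf continuous_const hq
  -- A Urysohn function separating the path component of `x` from the rest of the sublevel set
  -- would have to take the value `1 / 2` on `{f ≤ s}`.
  obtain ⟨g, hg0, hg1, -⟩ := exists_continuous_zero_one_of_isClosed isClosed_closure
    isClosed_closure (disjoint_closure_pathComponentIn_closure_sdiff (fun q hq =>
      exists_mem_nhds_isPathConnected_inter_setOf_lt hf hreg (hclosure q hq)) x)
  have hgx : g x = 0 := hg0 (subset_closure (mem_pathComponentIn_self hx))
  have hgy : g y = 1 := hg1 (subset_closure ⟨hy, hxy⟩)
  obtain ⟨w, hws, hw⟩ := exists_le_and_eq_of_forall_joinedIn hf hK h g.continuous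
    (r := 1 / 2) (by rw [hgx, hgy]; norm_num)
  have hwU : w ∈ closure {w | f w < s} := by
    rcases hws.lt_or_eq with hlt | rfl
    · exact subset_closure hlt
    · exact (hreg w rfl).mem_closure
  rw [← union_sdiff_cancel (pathComponentIn_subset (F := {w | f w < s}) (x := x)),
    closure_union] at hwU
  rcases hwU with hwV | hwW
  · exact absurd ((hg0 hwV).symm.trans hw) (by norm_num)
  · exact absurd ((hg1 hwW).symm.trans hw) (by norm_num)

theorem joinedIn_setOf_lt_of_forall_isRegularPoint [LocallyPathConnectedSpace X] [NormalSpace X]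
    [PathConnectedSpace X] (hf : Continuous f) (hK : ∀ w, IsCompact {z | f z ≤ f w})
    (hreg : ∀ q, R < f q → IsRegularPoint f q) (hx : f x ≤ R) (hy : f y ≤ R) :
    ∀ t > R, JoinedIn {w | f w < t} x y := by
  let S : Set ℝ := {t | JoinedIn {w | f w < t} x y}
  have hSne : S.Nonempty := by
    let γ := PathConnectedSpace.somePath x y
    obtain ⟨b, hb⟩ := (isCompact_range (hf.comp γ.continuous)).bddAbove
    exact ⟨b + 1, γ, fun i => (hb ⟨i, rfl⟩).trans_lt (lt_add_one b)⟩
  have hSbdd : BddBelow S := ⟨f x, fun t ht => le_of_lt ht.source_mem⟩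
  have hS : ∀ t > sInf S, t ∈ S := fun t ht => by
    obtain ⟨u, hu, hut⟩ := exists_lt_of_csInf_lt hSne ht
    exact hu.mono fun w hw => lt_trans hw hut
  suffices hSR : sInf S ≤ R from fun t ht => hS t (hSR.trans_lt ht)
  by_contra! hRS
  obtain ⟨t, ht, htS⟩ := exists_lt_joinedIn_setOf_lt hf <| joinedIn_setOf_lt_of_forall_gt hf hK
    (fun q hq => hreg q (hRS.trans_eq hq.symm)) (hx.trans_lt hRS) (hy.trans_lt hRS) hS
  exact (csInf_le hSbdd htS).not_gt ht

end MountainPass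

theorem isRegularPoint_norm_openPartialHomeomorph {X E : Type*} [TopologicalSpace X]
    [NormedAddCommGroup E] [NormedSpace ℝ E] (φ : OpenPartialHomeomorph X E) {q : X}
    (hq : q ∈ φ.source) (h0 : φ q ≠ 0) : IsRegularPoint (fun w => ‖φ w‖) q := by
  intro t ht
  have hct : Filter.Tendsto φ.symm (𝓝 (φ q)) (𝓝 q) := φ.tendsto_symm hq
  obtain ⟨ε, hε, hball⟩ := eventually_nhds_iff_ball.1
    ((φ.open_target.eventually_mem (φ.map_source hq)).and (hct.eventually_mem ht))
  have himage : φ.symm '' ball (φ q) ε ∩ {w | ‖φ w‖ < ‖φ q‖} =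
      φ.symm '' (ball (φ q) ε ∩ ball 0 ‖φ q‖) := by
    rw [← image_inter_preimage]
    congr 1
    ext v
    exact and_congr_right fun hv => by simp [φ.right_inv (hball v hv).1]
  have hne : (ball (φ q) ε ∩ ball 0 ‖φ q‖).Nonempty := by
    have : φ q ∈ closure (ball 0 ‖φ q‖) := by
      rw [closure_ball _ (norm_ne_zero_iff.2 h0)]; simp
    exact mem_closure_iff_nhds.1 this _ (ball_mem_nhds _ hε)
  refine ⟨φ.symm '' ball (φ q) ε, ?_, image_subset_iff.2 fun v hv => (hball v hv).2, ?_⟩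
  · simpa [φ.left_inv hq] using φ.symm.image_mem_nhds (φ.map_source hq) (ball_mem_nhds _ hε)
  · rw [himage]
    exact (((convex_ball _ _).inter (convex_ball _ _)).isPathConnected hne).image'
      (φ.continuousOn_symm.mono fun v hv => (hball v hv.1).1)

theorem isOpenEmbedding_coe_unitDisc : IsOpenEmbedding ((↑) : 𝔻 → ℂ) :=
  isOpen_ball.isOpenEmbedding_subtypeVal

instance : LocallyPathConnectedSpace 𝔻 := isOpenEmbedding_coe_unitDisc.locallyPathConnectedSpace

instance : PathConnectedSpace 𝔻 :=
  isPathConnected_iff_pathConnectedSpace.1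
    ((convex_ball (0 : ℂ) 1).isPathConnected (nonempty_ball.2 one_pos))

instance : NormalSpace 𝔻 :=
  have := UnitDisc.isEmbedding_coe.metrizableSpace
  inferInstance

theorem isRegularPoint_norm_comp_coe {g : ℂ → ℂ} {q : 𝔻} (hg : AnalyticAt ℂ g q)
    (hd : deriv g q ≠ 0) (h0 : g q ≠ 0) : IsRegularPoint (fun w : 𝔻 => ‖g w‖) q := by
  have hg' := hg.hasStrictDerivAt.hasStrictFDerivAt_equiv hd
  exact isRegularPoint_norm_openPartialHomeomorph
    ((isOpenEmbedding_coe_unitDisc.toOpenPartialHomeomorph _).trans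
      (hg'.toOpenPartialHomeomorph g)) (q := q)
    (by simpa using hg'.mem_toOpenPartialHomeomorph_source) h0

theorem isCompact_unitDisc_setOf_norm_le {g : ℂ → ℂ} (hg : ContinuousOn g (closedBall 0 1)) {c : ℝ}
    (hc : ∀ w ∈ sphere (0 : ℂ) 1, c < ‖g w‖) : IsCompact {w : 𝔻 | ‖g w‖ ≤ c} := by
  have himage : ((↑) : 𝔻 → ℂ) '' {w : 𝔻 | ‖g w‖ ≤ c} =
      closedBall 0 1 ∩ (fun w => ‖g w‖) ⁻¹' Iic c := by
    ext w
    constructor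
    · rintro ⟨v, hv, rfl⟩
      exact ⟨mem_closedBall_zero_iff.2 v.norm_lt_one.le, hv⟩
    · rintro ⟨hw, hwc⟩
      have hw1 : ‖w‖ < 1 := (mem_closedBall_zero_iff.1 hw).lt_of_ne fun h =>
        (hc w (mem_sphere_zero_iff_norm.2 h)).not_ge hwc
      exact ⟨.mk w hw1, hwc, rfl⟩
  rw [UnitDisc.isEmbedding_coe.isCompact_iff, himage]
  exact (isCompact_closedBall 0 1).of_isClosed_subset
    (hg.norm.preimage_isClosed_of_isClosed isClosed_closedBall isClosed_Iic) inter_subset_left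

theorem two_mul_div_four_pow_natDegree_le_of_forall_abs_eval_le {P : ℝ[X]} (hP : P.Monic)
    (hdeg : P.natDegree ≠ 0) {a b M : ℝ} (hab : a < b) (hM : ∀ x ∈ Icc a b, |P.eval x| ≤ M) :
    2 * ((b - a) / 4) ^ P.natDegree ≤ M := by
  refine le_of_forall_gt_imp_ge_of_dense fun M' hMM' => ?_
  have hM' : 0 < M' := ((abs_nonneg _).trans (hM a (left_mem_Icc.2 hab.le))).trans_lt hMM'
  have hslope : (b - a) / 2 ≠ 0 := (half_pos (sub_pos.2 hab)).ne'
  let L : ℝ[X] := .C ((b - a) / 2) * .X + .C ((a + b) / 2)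
  let Q : ℝ[X] := .C M'⁻¹ * P.comp L
  have hL : L.natDegree = 1 := Polynomial.natDegree_linear hslope
  have hQ : Q.leadingCoeff = M'⁻¹ * ((b - a) / 2) ^ P.natDegree := by
    rw [Polynomial.leadingCoeff_mul, Polynomial.leadingCoeff_C,
      Polynomial.leadingCoeff_comp (hL.trans_ne one_ne_zero), hP.leadingCoeff, one_mul,
      Polynomial.leadingCoeff_linear hslope]
  have hQdeg : Q.degree ≤ P.natDegree := Polynomial.degree_le_of_natDegree_le <| by
    simpa [Polynomial.natDegree_comp, hL] using Polynomial.natDegree_C_mul_le M'⁻¹ (P.comp L)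
  have hQle : ∀ x ∈ Icc (-1) 1, |Q.eval x| ≤ 1 := fun x hx => by
    have hLx : L.eval x ∈ Icc a b := by
      simp only [L, Polynomial.eval_add, Polynomial.eval_mul, Polynomial.eval_C, Polynomial.eval_X]
      constructor <;> nlinarith [hx.1, hx.2]
    rw [Polynomial.eval_mul, Polynomial.eval_C, Polynomial.eval_comp, abs_mul, abs_inv,
      abs_of_pos hM', inv_mul_le_one₀ hM']
    exact (hM _ hLx).trans hMM'.le
  have hlead := Polynomial.Chebyshev.leadingCoeff_le_of_forall_abs_le_one hQdeg hQle
  rw [hQ, inv_mul_le_iff₀ hM'] at hlead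
  obtain ⟨m, hm⟩ := Nat.exists_eq_succ_of_ne_zero hdeg
  rw [hm, Nat.succ_sub_one] at hlead
  calc 2 * ((b - a) / 4) ^ P.natDegree = ((b - a) / 2) ^ (m + 1) / 2 ^ m := by
        rw [hm, show (b - a) / 4 = (b - a) / 2 / 2 by ring, div_pow _ 2, pow_succ 2]
        field_simp
    _ ≤ M' := (div_le_iff₀ (by positivity)).2 hlead

theorem one_sub_norm_mul_norm_le_norm_one_sub_conj_mul (b w : ℂ) :
    1 - ‖b‖ * ‖w‖ ≤ ‖1 - conj b * w‖ := by
  simpa using norm_sub_norm_le 1 (conj b * w)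

theorem norm_sub_sq_eq_norm_one_sub_conj_mul_sq_sub (b w : ℂ) :
    ‖w - b‖ ^ 2 = ‖1 - conj b * w‖ ^ 2 - (1 - ‖w‖ ^ 2) * (1 - ‖b‖ ^ 2) := by
  simp only [← normSq_eq_norm_sq, normSq_apply, sub_re, sub_im, mul_re, mul_im, conj_re, conj_im,
    one_re, one_im]
  ring

/-- The Blaschke factor with zero `a`, without the normalizing factor of modulus one that makes its
value at the origin positive. -/
noncomputable def blaschkeFactor (a : 𝔻) (w : ℂ) : ℂ :=
  (w - a) / (1 - conj (a : ℂ) * w)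

section BlaschkeFactor

variable (a : 𝔻) {w : ℂ}

theorem norm_one_sub_conj_mul_pos (hw : ‖w‖ ≤ 1) : 0 < ‖1 - conj (a : ℂ) * w‖ := by
  have haw : ‖(a : ℂ)‖ * ‖w‖ < 1 := mul_lt_one_of_nonneg_of_lt_one_left (norm_nonneg _)
    a.norm_lt_one hw
  exact (sub_pos.2 haw).trans_le (one_sub_norm_mul_norm_le_norm_one_sub_conj_mul _ _)

theorem blaschkeFactor_self : blaschkeFactor a a = 0 := by
  rw [blaschkeFactor, sub_self, zero_div]

theorem blaschkeFactor_zero : blaschkeFactor a 0 = -a := by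
  simp [blaschkeFactor]

theorem analyticAt_blaschkeFactor (hw : ‖w‖ ≤ 1) : AnalyticAt ℂ (blaschkeFactor a) w :=
  (analyticAt_id.sub analyticAt_const).div
    (analyticAt_const.sub (analyticAt_const.mul analyticAt_id))
    (norm_pos_iff.1 (norm_one_sub_conj_mul_pos a hw))

theorem norm_blaschkeFactor_of_norm_eq_one (hw : ‖w‖ = 1) : ‖blaschkeFactor a w‖ = 1 := by
  have hsq := norm_sub_sq_eq_norm_one_sub_conj_mul_sq_sub a w
  rw [hw, one_pow, sub_self, zero_mul, sub_zero, sq_eq_sq₀ (norm_nonneg _) (norm_nonneg _)] at hsq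
  rw [blaschkeFactor, norm_div, hsq, div_self (norm_one_sub_conj_mul_pos a hw.le).ne']

theorem norm_blaschkeFactor_le_one (hw : ‖w‖ ≤ 1) : ‖blaschkeFactor a w‖ ≤ 1 := by
  rw [blaschkeFactor, norm_div, div_le_one (norm_one_sub_conj_mul_pos a hw),
    ← sq_le_sq₀ (norm_nonneg _) (norm_nonneg _),
    norm_sub_sq_eq_norm_one_sub_conj_mul_sq_sub (a : ℂ) w]
  have ha : 0 ≤ 1 - ‖(a : ℂ)‖ ^ 2 := sub_nonneg.2 a.sq_norm_lt_one.le
  have hw' : 0 ≤ 1 - ‖w‖ ^ 2 := sub_nonneg.2 (pow_le_one₀ (norm_nonneg w) hw)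
  exact sub_le_self _ (mul_nonneg hw' ha)

theorem abs_norm_sub_norm_le_norm_blaschkeFactor (hw : ‖w‖ ≤ 1) :
    |‖w‖ - ‖(a : ℂ)‖| ≤ ‖blaschkeFactor a w‖ := by
  have ha := a.norm_lt_one.le
  rw [blaschkeFactor, norm_div, le_div_iff₀ (norm_one_sub_conj_mul_pos a hw),
    ← sq_le_sq₀ (by positivity) (norm_nonneg _), mul_pow, sq_abs,
    norm_sub_sq_eq_norm_one_sub_conj_mul_sq_sub (a : ℂ) w]
  have hden := one_sub_norm_mul_norm_le_norm_one_sub_conj_mul a w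
  set α := ‖(a : ℂ)‖
  set r := ‖w‖
  set D := ‖1 - conj (a : ℂ) * w‖
  have hα : 0 ≤ α := norm_nonneg _
  have hr : 0 ≤ r := norm_nonneg _
  have hαr : 0 ≤ 1 - α * r := sub_nonneg.2 (mul_le_one₀ ha hr hw)
  have hdist : 0 ≤ 1 - (r - α) ^ 2 := sub_nonneg.2 (by nlinarith)
  suffices (1 - r ^ 2) * (1 - α ^ 2) ≤ D ^ 2 * (1 - (r - α) ^ 2) by linarith
  calc (1 - r ^ 2) * (1 - α ^ 2) = (1 - α * r) ^ 2 - (r - α) ^ 2 := by ring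
    _ ≤ (1 - α * r) ^ 2 - (1 - α * r) ^ 2 * (r - α) ^ 2 := by
        gcongr
        exact mul_le_of_le_one_left (sq_nonneg _)
          (pow_le_one₀ hαr (sub_le_self _ (mul_nonneg hα hr)))
    _ = (1 - α * r) ^ 2 * (1 - (r - α) ^ 2) := by ring
    _ ≤ D ^ 2 * (1 - (r - α) ^ 2) := by gcongr

end BlaschkeFactor

/-- The finite Blaschke product with a zero at the origin, further zeros `a k` counted with
multiplicity, and unimodular constant `1`. -/
noncomputable def blaschkeProduct {ι : Type*} [Fintype ι] (a : ι → 𝔻) (w : ℂ) : ℂ :=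
  w * ∏ k, blaschkeFactor (a k) w

section BlaschkeProduct

variable {ι : Type*} [Fintype ι] (a : ι → 𝔻) {w : ℂ} {c R r : ℝ}

theorem norm_blaschkeProduct (w : ℂ) :
    ‖blaschkeProduct a w‖ = ‖w‖ * ∏ k, ‖blaschkeFactor (a k) w‖ := by
  rw [blaschkeProduct, norm_mul, norm_prod]

theorem blaschkeProduct_zero : blaschkeProduct a 0 = 0 :=
  zero_mul _

theorem blaschkeProduct_apply_self (k : ι) : blaschkeProduct a (a k) = 0 := by
  rw [blaschkeProduct, Finset.prod_eq_zero (Finset.mem_univ k) (blaschkeFactor_self _), mul_zero]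

theorem analyticAt_blaschkeProduct (hw : ‖w‖ ≤ 1) : AnalyticAt ℂ (blaschkeProduct a) w :=
  analyticAt_id.mul (Finset.analyticAt_fun_prod _ fun k _ => analyticAt_blaschkeFactor (a k) hw)

theorem continuousOn_blaschkeProduct : ContinuousOn (blaschkeProduct a) (closedBall 0 1) :=
  fun _ hw =>
    (analyticAt_blaschkeProduct a (mem_closedBall_zero_iff.1 hw)).continuousAt.continuousWithinAt

theorem norm_blaschkeProduct_of_norm_eq_one (hw : ‖w‖ = 1) : ‖blaschkeProduct a w‖ = 1 := by
  rw [norm_blaschkeProduct, hw, one_mul]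
  exact Finset.prod_eq_one fun k _ => norm_blaschkeFactor_of_norm_eq_one (a k) hw

theorem norm_blaschkeProduct_lt_one (w : 𝔻) : ‖blaschkeProduct a w‖ < 1 := by
  rw [norm_blaschkeProduct]
  refine (mul_le_of_le_one_right (norm_nonneg _) ?_).trans_lt w.norm_lt_one
  exact Finset.prod_le_one (fun k _ => norm_nonneg _)
    fun k _ => norm_blaschkeFactor_le_one (a k) w.norm_lt_one.le

theorem norm_deriv_blaschkeProduct_zero : ‖deriv (blaschkeProduct a) 0‖ = ∏ k, ‖(a k : ℂ)‖ := by
  have hprod : DifferentiableAt ℂ (fun w => ∏ k, blaschkeFactor (a k) w) 0 :=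
    (Finset.analyticAt_fun_prod _ fun k _ =>
      analyticAt_blaschkeFactor (a k) (by simp)).differentiableAt
  have hderiv : deriv (blaschkeProduct a) 0 = ∏ k, blaschkeFactor (a k) 0 :=
    ((hasDerivAt_id (0 : ℂ)).mul hprod.hasDerivAt).deriv.trans (by simp)
  simp only [hderiv, blaschkeFactor_zero, norm_prod, norm_neg]

theorem norm_mul_prod_abs_norm_sub_le_norm_blaschkeProduct (hw : ‖w‖ ≤ 1) :
    ‖w‖ * ∏ k, |‖w‖ - ‖(a k : ℂ)‖| ≤ ‖blaschkeProduct a w‖ := by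
  rw [norm_blaschkeProduct]
  gcongr with k
  exact abs_norm_sub_norm_le_norm_blaschkeFactor (a k) hw

theorem exists_norm_eq_and_norm_blaschkeProduct_le
    (hcrit : ∀ ζ : 𝔻, deriv (blaschkeProduct a) ζ = 0 → ‖blaschkeProduct a ζ‖ ≤ R) {p : 𝔻}
    (hp : ‖blaschkeProduct a p‖ ≤ R) (hr : r ∈ Icc 0 ‖(p : ℂ)‖) :
    ∃ w : 𝔻, ‖blaschkeProduct a w‖ ≤ R ∧ ‖(w : ℂ)‖ = r := by
  have hR : 0 ≤ R := (norm_nonneg _).trans hp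
  have hf : Continuous fun w : 𝔻 => ‖blaschkeProduct a w‖ :=
    ((continuousOn_blaschkeProduct a).comp_continuous UnitDisc.continuous_coe fun w =>
      mem_closedBall_zero_iff.2 w.norm_lt_one.le).norm
  have hK : ∀ w : 𝔻, IsCompact {z : 𝔻 | ‖blaschkeProduct a z‖ ≤ ‖blaschkeProduct a w‖} := fun w =>
    isCompact_unitDisc_setOf_norm_le (continuousOn_blaschkeProduct a) fun v hv =>
      (norm_blaschkeProduct_lt_one a w).trans_eq
        (norm_blaschkeProduct_of_norm_eq_one a (mem_sphere_zero_iff_norm.1 hv)).symm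
  have hreg : ∀ q : 𝔻, R < ‖blaschkeProduct a q‖ →
      IsRegularPoint (fun w : 𝔻 => ‖blaschkeProduct a w‖) q := fun q hq =>
    isRegularPoint_norm_comp_coe (analyticAt_blaschkeProduct a q.norm_lt_one.le)
      (fun hd => (hcrit q hd).not_gt hq) (norm_pos_iff.1 (hR.trans_lt hq))
  have h0 : ‖blaschkeProduct a (0 : 𝔻)‖ ≤ R := by
    rwa [UnitDisc.coe_zero, blaschkeProduct_zero, norm_zero]
  exact exists_le_and_eq_of_forall_joinedIn hf hK
    (joinedIn_setOf_lt_of_forall_isRegularPoint hf hK hreg h0 hp)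
    UnitDisc.continuous_coe.norm (by simpa using hr)

theorem two_mul_norm_div_four_pow_le_of_critical_le
    (hcrit : ∀ ζ : 𝔻, deriv (blaschkeProduct a) ζ = 0 → ‖blaschkeProduct a ζ‖ ≤ R) {p : 𝔻}
    (hp : ‖blaschkeProduct a p‖ ≤ R) : 2 * (‖(p : ℂ)‖ / 4) ^ (Fintype.card ι + 1) ≤ R := by
  rcases (norm_nonneg (p : ℂ)).eq_or_lt with hp0 | hp0
  · simpa [← hp0] using (norm_nonneg _).trans hp
  let Q : ℝ[X] := ∏ k, (.X - .C ‖(a k : ℂ)‖)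
  have hQ : Q.Monic := Polynomial.monic_prod_X_sub_C _ _
  have hQdeg : Q.natDegree = Fintype.card ι := Polynomial.natDegree_finsetProd_X_sub_C_eq_card _ _
  have hdeg : (.X * Q : ℝ[X]).natDegree = Fintype.card ι + 1 := by
    rw [Polynomial.natDegree_X_mul hQ.ne_zero, hQdeg]
  have hbound : ∀ r ∈ Icc 0 ‖(p : ℂ)‖, |(.X * Q : ℝ[X]).eval r| ≤ R := fun r hr => by
    obtain ⟨w, hwR, rfl⟩ := exists_norm_eq_and_norm_blaschkeProduct_le a hcrit hp hr
    refine le_trans ?_ hwR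
    simpa [Q, Polynomial.eval_prod, abs_mul, Finset.abs_prod] using
      norm_mul_prod_abs_norm_sub_le_norm_blaschkeProduct a w.norm_lt_one.le
  simpa [hdeg] using two_mul_div_four_pow_natDegree_le_of_forall_abs_eval_le
    (Polynomial.monic_X.mul hQ) (by simp [hdeg]) hp0 hbound

theorem norm_le_mul_pow_of_norm_div_le {d : ℝ} (hc : 0 ≤ c) (h0 : deriv (blaschkeProduct a) 0 ≠ 0)
    (ha : ∀ k, ‖(a k : ℂ)‖ ≤ d) {ζ : ℂ} (hζ0 : ζ ≠ 0) (hζd : ‖ζ‖ ≤ d)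
    (hζ : ‖blaschkeProduct a ζ / (ζ * deriv (blaschkeProduct a) 0)‖ ≤ c) :
    ‖blaschkeProduct a ζ‖ ≤ c * d ^ (Fintype.card ι + 1) := by
  rw [norm_div, div_le_iff₀ (norm_pos_iff.2 (mul_ne_zero hζ0 h0)), norm_mul,
    norm_deriv_blaschkeProduct_zero] at hζ
  have hprod : ∏ k, ‖(a k : ℂ)‖ ≤ d ^ Fintype.card ι :=
    (Finset.prod_le_prod (fun k _ => norm_nonneg _) fun k _ => ha k).trans_eq
      (by rw [Finset.prod_const, Finset.card_univ])
  calc ‖blaschkeProduct a ζ‖ ≤ c * (‖ζ‖ * ∏ k, ‖(a k : ℂ)‖) := hζ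
    _ ≤ c * (d * d ^ Fintype.card ι) := by gcongr; exact (norm_nonneg _).trans hζd
    _ = c * d ^ (Fintype.card ι + 1) := by rw [pow_succ']

theorem two_div_four_pow_le_of_forall_critical [Nonempty ι] (hc : 0 ≤ c)
    (h0 : deriv (blaschkeProduct a) 0 ≠ 0)
    (h : ∀ ζ : 𝔻, deriv (blaschkeProduct a) ζ = 0 →
      ‖blaschkeProduct a ζ / (ζ * deriv (blaschkeProduct a) 0)‖ ≤ c) :
    2 / 4 ^ (Fintype.card ι + 1) ≤ c := by
  let A : Set 𝔻 := range a ∪ {ζ : 𝔻 | deriv (blaschkeProduct a) ζ = 0}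
  obtain ⟨k₀⟩ := ‹Nonempty ι›
  have hAne : ((fun p : 𝔻 => ‖(p : ℂ)‖) '' A).Nonempty := ⟨_, a k₀, .inl ⟨k₀, rfl⟩, rfl⟩
  obtain ⟨d, hd⟩ := Real.exists_isLUB hAne
    ⟨1, forall_mem_image.2 fun p _ => p.norm_lt_one.le⟩
  have hAd : ∀ p ∈ A, ‖(p : ℂ)‖ ≤ d := fun p hp => hd.1 (mem_image_of_mem _ hp)
  have had : ∀ k, ‖(a k : ℂ)‖ ≤ d := fun k => hAd _ (.inl ⟨k, rfl⟩)
  have hd0 : 0 < d := by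
    refine lt_of_lt_of_le (norm_pos_iff.2 fun hk₀ => norm_ne_zero_iff.2 h0 ?_) (had k₀)
    rw [norm_deriv_blaschkeProduct_zero,
      Finset.prod_eq_zero (Finset.mem_univ k₀) (by rw [hk₀, norm_zero])]
  have hcrit : ∀ ζ : 𝔻, deriv (blaschkeProduct a) ζ = 0 →
      ‖blaschkeProduct a ζ‖ ≤ c * d ^ (Fintype.card ι + 1) := fun ζ hζ =>
    norm_le_mul_pow_of_norm_div_le a hc h0 had (fun hζ0 => h0 (hζ0 ▸ hζ))
      (hAd ζ (.inr hζ)) (h ζ hζ)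
  have hA : ∀ p ∈ A, 2 * (‖(p : ℂ)‖ / 4) ^ (Fintype.card ι + 1) ≤
      c * d ^ (Fintype.card ι + 1) := by
    rintro p (⟨k, rfl⟩ | hp) <;> refine two_mul_norm_div_four_pow_le_of_critical_le a hcrit ?_
    · rw [blaschkeProduct_apply_self, norm_zero]
      positivity
    · exact hcrit p hp
  have hsup : 2 * (d / 4) ^ (Fintype.card ι + 1) ≤ c * d ^ (Fintype.card ι + 1) :=
    closure_minimal (t := {t | 2 * (t / 4) ^ (Fintype.card ι + 1) ≤ c * d ^ (Fintype.card ι + 1)})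
      (image_subset_iff.2 hA) (isClosed_le (by fun_prop) continuous_const) (hd.mem_closure hAne)
  rwa [div_pow, mul_div_left_comm, mul_comm, mul_le_mul_iff_left₀ (pow_pos hd0 _)] at hsup

end BlaschkeProduct

theorem L_n_gt_general {ι : Type*} [Fintype ι] [Nonempty ι] (z : ι → ℂ) (hz : ∀ k, ‖z k‖ < 1)
    (B : ℂ → ℂ)
    (hB : B = fun w => w * ∏ k, (w - z k) / (1 - (starRingEnd ℂ) (z k) * w))
    (hB0 : deriv B 0 ≠ 0) {c : ℝ} (hc : c < 2 / 4 ^ (Fintype.card ι + 1)) :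
    ∃ ζ : ℂ, ‖ζ‖ < 1 ∧ deriv B ζ = 0 ∧ c < ‖B ζ / (ζ * deriv B 0)‖ := by
  lift z to ι → 𝔻 using hz
  obtain rfl : B = blaschkeProduct z := hB
  by_contra! hcrit
  have hbound := two_div_four_pow_le_of_forall_critical z (le_max_right c 0) hB0 fun ζ hζ =>
    (hcrit ζ ζ.norm_lt_one hζ).trans (le_max_left c 0)
  exact (max_lt hc (by positivity)).not_ge hbound

/-- `L_n > 1/4^n`: every finite Blaschke product of degree `n ≥ 2` with `B(0) = 0`
and `B'(0) ≠ 0` has a critical point `ζ` in the unit disk with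
`|B(ζ)/(ζ B'(0))| > 1/4^n`. -/
theorem L_n_gt (n : ℕ) (hn : 2 ≤ n) (z : Fin (n - 1) → ℂ) (hz : ∀ k, ‖z k‖ < 1)
    (B : ℂ → ℂ)
    (hB : B = fun w => w * ∏ k, (w - z k) / (1 - (starRingEnd ℂ) (z k) * w))
    (hB0 : deriv B 0 ≠ 0) :
    ∃ ζ : ℂ, ‖ζ‖ < 1 ∧ deriv B ζ = 0 ∧
      1 / 4 ^ n < ‖B ζ / (ζ * deriv B 0)‖ := by
  have : Nonempty (Fin (n - 1)) := ⟨⟨0, by omega⟩⟩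
  refine L_n_gt_general z hz B hB hB0 ?_
  rw [Fintype.card_fin, Nat.sub_add_cancel (by omega)]
  gcongr
  exact one_lt_two
end

section
/- N_n ≥ L_n for all n ≥ 2: if C > 0 is such that every finite Blaschke product B of degree n with B(0)=0, B'(0)≠0 has a critical point c in D with |B(c)/(c B'(0))| ≥ C, then every monic polynomial P of degree n with P(0) = 0 and P'(0) ≠ 0 has a critical point c with |P(c)/(c P'(0))| ≥ C. -/
open Complex Polynomial

/-! Write `P(w) = w ∏ (w - aₖ)` and let `B` be the Blaschke product with zeros `0` and `s aₖ`. Then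
`B(s w) = s ^ n F(|s|², w)`, where `F(t, w) = w ∏ (w - aₖ) / (1 - t āₖ w)` is analytic at `t = 0`
and `F(0, ·) = P`. The quantity `B(c) / (c B'(0))` is invariant under the rescaling `c = s w`, so
the hypothesis provides critical points `w` of `F(|s|², ·)` for all small `s ≠ 0`. They all lie in
the closed disc of radius `max |aₖ|`, because the real part of `c B'(c) / B(c)` is positive when
`max |s aₖ| < |c| < 1`. Compactness then yields a limiting critical point of `P`. -/

open Filter Function
open scoped ComplexConjugate Topology

section DualMeanValueRatio

variable {𝕜 : Type*} [NontriviallyNormedField 𝕜]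

/-- The ratio `f c / (c f'(0))` whose modulus at critical points `c` is the subject of the dual mean
value problem. It is `0` by convention when `c f'(0) = 0`. -/
noncomputable def dualMeanValueRatio (f : 𝕜 → 𝕜) (c : 𝕜) : 𝕜 :=
  f c / (c * deriv f 0)

lemma dualMeanValueRatio_const_mul {μ : 𝕜} (hμ : μ ≠ 0) (f : 𝕜 → 𝕜) (c : 𝕜) :
    dualMeanValueRatio (fun w ↦ μ * f w) c = dualMeanValueRatio f c := by
  simp only [dualMeanValueRatio, deriv_const_mul_field]
  rw [mul_left_comm, mul_div_mul_left _ _ hμ]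

lemma dualMeanValueRatio_comp_mul_left (s : 𝕜) (f : 𝕜 → 𝕜) (c : 𝕜) :
    dualMeanValueRatio (fun w ↦ f (s * w)) c = dualMeanValueRatio f (s * c) := by
  simp only [dualMeanValueRatio, deriv_comp_mul_left, mul_zero, smul_eq_mul]
  rw [mul_left_comm, mul_assoc]

lemma continuousAt_deriv_of_contDiffAt_uncurry {E : Type*} [NormedAddCommGroup E]
    [NormedSpace 𝕜 E] {F : E → 𝕜 → 𝕜} {p : E × 𝕜} (hF : ContDiffAt 𝕜 1 (uncurry F) p) :
    ContinuousAt (fun q : E × 𝕜 ↦ deriv (F q.1) q.2) p := by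
  have hF' : ContDiffAt 𝕜 1 (uncurry fun q : E × 𝕜 ↦ F q.1) (p, p.2) :=
    ContDiffAt.comp (g := uncurry F) (f := fun r : (E × 𝕜) × 𝕜 ↦ (r.1.1, r.2)) (p, p.2) hF
      (by fun_prop)
  have hfderiv : ContDiffAt 𝕜 0 (fun q : E × 𝕜 ↦ fderiv 𝕜 (F q.1) q.2) p :=
    hF'.fderiv contDiffAt_snd (by simp)
  exact hfderiv.continuousAt.clm_apply continuousAt_const

lemma continuousAt_dualMeanValueRatio {E : Type*} [NormedAddCommGroup E] [NormedSpace 𝕜 E]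
    {F : E → 𝕜 → 𝕜} {x : E} {w : 𝕜} (hF : ContDiffAt 𝕜 1 (uncurry F) (x, w))
    (hF₀ : ContDiffAt 𝕜 1 (uncurry F) (x, 0)) (hw : w ≠ 0) (hderiv : deriv (F x) 0 ≠ 0) :
    ContinuousAt (fun q : E × 𝕜 ↦ dualMeanValueRatio (F q.1) q.2) (x, w) := by
  have hcont : ContinuousAt (fun q : E × 𝕜 ↦ deriv (F q.1) 0) (x, w) :=
    ContinuousAt.comp (f := fun q : E × 𝕜 ↦ (q.1, (0 : 𝕜)))
      (continuousAt_deriv_of_contDiffAt_uncurry hF₀) (by fun_prop)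
  exact hF.continuousAt.div (continuousAt_snd.mul hcont) (mul_ne_zero hw hderiv)

theorem exists_critical_le_dualMeanValueRatio_of_frequently {E : Type*} [NormedAddCommGroup E]
    [NormedSpace 𝕜 E] {F : E → 𝕜 → 𝕜} {x : E} {K : Set 𝕜} {C : ℝ} (hK : IsCompact K)
    (hF : ∀ w, ContDiffAt 𝕜 1 (uncurry F) (x, w)) (hderiv : deriv (F x) 0 ≠ 0)
    (hcrit : ∃ᶠ y in 𝓝 x, ∃ w ∈ K, deriv (F y) w = 0 ∧ C ≤ ‖dualMeanValueRatio (F y) w‖) :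
    ∃ w ∈ K, deriv (F x) w = 0 ∧ C ≤ ‖dualMeanValueRatio (F x) w‖ := by
  obtain ⟨w, hwK, hw⟩ : ∃ w ∈ K, ∃ᶠ q in 𝓝 (x, w),
      deriv (F q.1) q.2 = 0 ∧ C ≤ ‖dualMeanValueRatio (F q.1) q.2‖ := by
    contrapose! hcrit
    simpa using hK.eventually_forall_of_forall_eventually
      (P := fun y w ↦ ¬(deriv (F y) w = 0 ∧ C ≤ ‖dualMeanValueRatio (F y) w‖))
      (by simpa using hcrit)
  have hzero : deriv (F x) w = 0 :=
    isClosed_singleton.mem_of_frequently_of_tendsto (hw.mono fun _ h ↦ h.1)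
      (continuousAt_deriv_of_contDiffAt_uncurry (hF w))
  have hw₀ : w ≠ 0 := by
    rintro rfl
    exact hderiv hzero
  exact ⟨w, hwK, hzero, ge_of_tendsto_of_frequently
    (continuousAt_dualMeanValueRatio (hF w) (hF 0) hw₀ hderiv).norm (hw.mono fun _ h ↦ h.2)⟩

end DualMeanValueRatio

section Blaschke

variable {ι : Type*} [Fintype ι]

/-- The finite Blaschke product whose zeros are `0` and the `z k`, when these lie in the unit disc;
its degree is one more than the number of indices. -/
noncomputable def blaschke (z : ι → ℂ) (w : ℂ) : ℂ :=
  w * ∏ k, (w - z k) / (1 - conj (z k) * w)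

lemma one_sub_ne_zero_of_norm_lt_one {R : Type*} [NormedRing R] [NormOneClass R] {u : R}
    (hu : ‖u‖ < 1) : 1 - u ≠ 0 := by
  rw [sub_ne_zero]
  rintro rfl
  simp at hu

lemma norm_conj_mul_lt_one {z w : ℂ} (hz : ‖z‖ < 1) (hw : ‖w‖ ≤ 1) : ‖conj z * w‖ < 1 := by
  rw [norm_mul, RCLike.norm_conj]
  exact mul_lt_one_of_nonneg_of_lt_one_left (norm_nonneg z) hz hw

lemma half_lt_re_inv_one_sub {u : ℂ} (hu : ‖u‖ < 1) : 1 / 2 < ((1 - u)⁻¹).re := by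
  have hpos : 0 < normSq (1 - u) := normSq_pos.mpr (one_sub_ne_zero_of_norm_lt_one hu)
  have hu' : normSq u < 1 := by
    rw [normSq_eq_norm_sq]
    exact pow_lt_one₀ (norm_nonneg u) hu two_ne_zero
  rw [inv_re, lt_div_iff₀ hpos]
  simp only [normSq_apply, sub_re, sub_im, one_re, one_im] at hu' ⊢
  linarith

lemma logDeriv_blaschkeFactor {z w : ℂ} (hw : w - z ≠ 0) (hz : 1 - conj z * w ≠ 0) :
    logDeriv (fun v ↦ (v - z) / (1 - conj z * v)) w = 1 / (w - z) + conj z / (1 - conj z * w) := by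
  rw [logDeriv_div w hw hz (by fun_prop) (by fun_prop)]
  simp [logDeriv_apply, neg_div]

lemma re_mul_logDeriv_blaschkeFactor_pos {z w : ℂ} (hzw : ‖z‖ < ‖w‖) (hw : ‖w‖ < 1) :
    0 < (w * logDeriv (fun v ↦ (v - z) / (1 - conj z * v)) w).re := by
  have hw₀ : w ≠ 0 := norm_pos_iff.mp ((norm_nonneg z).trans_lt hzw)
  have hquot : ‖z / w‖ < 1 := by rwa [norm_div, div_lt_one (norm_pos_iff.mpr hw₀)]
  have hprod : ‖conj z * w‖ < 1 := norm_conj_mul_lt_one (hzw.trans hw) hw.le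
  have hsub : w - z ≠ 0 := sub_ne_zero.mpr (ne_of_apply_ne norm hzw.ne')
  have hden := one_sub_ne_zero_of_norm_lt_one hprod
  have hsum : w * logDeriv (fun v ↦ (v - z) / (1 - conj z * v)) w =
      (1 - z / w)⁻¹ + (1 - conj z * w)⁻¹ - 1 := by
    have hreflected : w * (conj z / (1 - conj z * w)) = (1 - conj z * w)⁻¹ - 1 := by
      rw [eq_sub_iff_add_eq, ← mul_div_assoc, div_add_one hden, mul_comm w, add_sub_cancel,
        one_div]
    rw [logDeriv_blaschkeFactor hsub hden, mul_add, hreflected, mul_one_div, one_sub_div hw₀,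
      inv_div, add_sub_assoc]
  rw [hsum, sub_re, add_re, one_re]
  linarith [half_lt_re_inv_one_sub hquot, half_lt_re_inv_one_sub hprod]

theorem deriv_blaschke_ne_zero {z : ι → ℂ} {w : ℂ} (hzw : ‖z‖ < ‖w‖) (hw : ‖w‖ < 1) :
    deriv (blaschke z) w ≠ 0 := by
  have hlt (k : ι) : ‖z k‖ < ‖w‖ := (norm_le_pi_norm z k).trans_lt hzw
  have hw₀ : w ≠ 0 := norm_pos_iff.mp ((norm_nonneg z).trans_lt hzw)
  have hden (k : ι) : 1 - conj (z k) * w ≠ 0 :=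
    one_sub_ne_zero_of_norm_lt_one (norm_conj_mul_lt_one ((hlt k).trans hw) hw.le)
  have hfactor (k : ι) : (w - z k) / (1 - conj (z k) * w) ≠ 0 :=
    div_ne_zero (sub_ne_zero.mpr (ne_of_apply_ne norm (hlt k).ne')) (hden k)
  have hdiff (k : ι) : DifferentiableAt ℂ (fun v ↦ (v - z k) / (1 - conj (z k) * v)) w :=
    DifferentiableAt.fun_div (by fun_prop) (by fun_prop) (hden k)
  have hlog : w * logDeriv (blaschke z) w =
      1 + ∑ k, w * logDeriv (fun v ↦ (v - z k) / (1 - conj (z k) * v)) w := by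
    unfold blaschke
    rw [logDeriv_mul w hw₀ (Finset.prod_ne_zero_iff.mpr fun k _ ↦ hfactor k) (by fun_prop)
      (by fun_prop), logDeriv_prod (fun k _ ↦ hfactor k) (fun k _ ↦ hdiff k), mul_add,
      Finset.mul_sum, logDeriv_id', mul_one_div_cancel hw₀]
  have hre : 0 < (w * logDeriv (blaschke z) w).re := by
    rw [hlog, add_re, one_re, re_sum]
    exact add_pos_of_pos_of_nonneg one_pos
      (Finset.sum_nonneg fun k _ ↦ (re_mul_logDeriv_blaschkeFactor_pos (hlt k) hw).le)
  intro hzero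
  simp [logDeriv_apply, hzero] at hre

/-- The family deforming the polynomial `w ∏ (w - a k)`, at `t = 0`, through rescaled Blaschke
products: up to a constant, it is `w ↦ blaschke (s • a) (s * w)` when `t = ‖s‖ ^ 2`. -/
noncomputable def rescaledBlaschke (a : ι → ℂ) (t w : ℂ) : ℂ :=
  w * ∏ k, (w - a k) / (1 - t * (conj (a k) * w))

lemma blaschke_smul_mul (a : ι → ℂ) (s w : ℂ) :
    blaschke (s • a) (s * w) =
      s ^ (Fintype.card ι + 1) * rescaledBlaschke a ((‖s‖ : ℂ) ^ 2) w := by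
  have hfactor (k : ι) : (s * w - (s • a) k) / (1 - conj ((s • a) k) * (s * w)) =
      s * ((w - a k) / (1 - (‖s‖ : ℂ) ^ 2 * (conj (a k) * w))) := by
    rw [← conj_mul', Pi.smul_apply, smul_eq_mul, map_mul, ← mul_sub, mul_div_assoc,
      mul_mul_mul_comm, mul_comm (conj s) s, mul_mul_mul_comm]
  simp only [blaschke, rescaledBlaschke, hfactor, Finset.prod_mul_distrib, Finset.prod_const,
    Finset.card_univ]
  ring

lemma deriv_blaschke_smul_mul_eq_zero_iff (a : ι → ℂ) {s : ℂ} (hs : s ≠ 0) (w : ℂ) :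
    deriv (blaschke (s • a)) (s * w) = 0 ↔ deriv (rescaledBlaschke a ((‖s‖ : ℂ) ^ 2)) w = 0 := by
  have h := deriv_comp_mul_left s (blaschke (s • a)) w
  simp only [blaschke_smul_mul, deriv_const_mul_field, smul_eq_mul] at h
  rw [← mul_eq_zero_iff_left hs, ← h, mul_eq_zero_iff_left (pow_ne_zero _ hs)]

lemma dualMeanValueRatio_blaschke_smul (a : ι → ℂ) {s : ℂ} (hs : s ≠ 0) (w : ℂ) :
    dualMeanValueRatio (blaschke (s • a)) (s * w) =
      dualMeanValueRatio (rescaledBlaschke a ((‖s‖ : ℂ) ^ 2)) w := by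
  rw [← dualMeanValueRatio_comp_mul_left]
  simp only [blaschke_smul_mul]
  exact dualMeanValueRatio_const_mul (pow_ne_zero _ hs) _ w

lemma contDiffAt_rescaledBlaschke_zero (a : ι → ℂ) (w : ℂ) :
    ContDiffAt ℂ 1 (uncurry (rescaledBlaschke a)) (0, w) := by
  refine contDiffAt_snd.mul (contDiffAt_prod fun k _ ↦ ContDiffAt.div ?_ ?_ ?_)
  · fun_prop
  · fun_prop
  · simp

lemma exists_critical_rescaledBlaschke {a : ι → ℂ} {s : ℂ} {C : ℝ} (hs : s ≠ 0)
    (hcrit : ∃ c, ‖c‖ < 1 ∧ deriv (blaschke (s • a)) c = 0 ∧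
      C ≤ ‖dualMeanValueRatio (blaschke (s • a)) c‖) :
    ∃ w ∈ Metric.closedBall 0 ‖a‖, deriv (rescaledBlaschke a ((‖s‖ : ℂ) ^ 2)) w = 0 ∧
      C ≤ ‖dualMeanValueRatio (rescaledBlaschke a ((‖s‖ : ℂ) ^ 2)) w‖ := by
  obtain ⟨c, hc, hzero, hle⟩ := hcrit
  obtain ⟨w, rfl⟩ : ∃ w, c = s * w := ⟨c / s, (mul_div_cancel₀ c hs).symm⟩
  have hbound : ‖s * w‖ ≤ ‖s • a‖ := not_lt.mp fun h ↦ deriv_blaschke_ne_zero h hc hzero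
  rw [norm_mul, norm_smul] at hbound
  exact ⟨w, mem_closedBall_zero_iff.mpr (le_of_mul_le_mul_left hbound (norm_pos_iff.mpr hs)),
    (deriv_blaschke_smul_mul_eq_zero_iff a hs w).mp hzero,
    hle.trans_eq (congrArg norm (dualMeanValueRatio_blaschke_smul a hs w))⟩

theorem exists_critical_rescaledBlaschke_zero {a : ι → ℂ} {C : ℝ}
    (hderiv : deriv (rescaledBlaschke a 0) 0 ≠ 0)
    (hblaschke : ∀ z : ι → ℂ, (∀ k, ‖z k‖ < 1) → deriv (blaschke z) 0 ≠ 0 →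
      ∃ c, ‖c‖ < 1 ∧ deriv (blaschke z) c = 0 ∧ C ≤ ‖dualMeanValueRatio (blaschke z) c‖) :
    ∃ w, deriv (rescaledBlaschke a 0) w = 0 ∧
      C ≤ ‖dualMeanValueRatio (rescaledBlaschke a 0) w‖ := by
  have htendsto : Tendsto (fun s : ℂ ↦ (‖s‖ : ℂ) ^ 2) (𝓝[≠] 0) (𝓝 0) :=
    tendsto_nhdsWithin_of_tendsto_nhds (Continuous.tendsto' (by fun_prop) _ _ (by simp))
  have hsmall : ∀ᶠ s : ℂ in 𝓝[≠] 0, ‖s • a‖ < 1 := by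
    refine nhdsWithin_le_nhds (ContinuousAt.eventually_lt (by fun_prop) continuousAt_const ?_)
    simp
  have hderiv_near : ∀ᶠ t in 𝓝 0, deriv (rescaledBlaschke a t) 0 ≠ 0 :=
    ((continuousAt_deriv_of_contDiffAt_uncurry (contDiffAt_rescaledBlaschke_zero a 0)).comp
      (f := fun t : ℂ ↦ (t, (0 : ℂ))) (by fun_prop)).eventually_ne hderiv
  have hcrit : ∀ᶠ s : ℂ in 𝓝[≠] 0, ∃ w ∈ Metric.closedBall 0 ‖a‖,
      deriv (rescaledBlaschke a ((‖s‖ : ℂ) ^ 2)) w = 0 ∧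
        C ≤ ‖dualMeanValueRatio (rescaledBlaschke a ((‖s‖ : ℂ) ^ 2)) w‖ := by
    filter_upwards [self_mem_nhdsWithin, hsmall, htendsto.eventually hderiv_near]
      with s hs hnorm hne
    refine exists_critical_rescaledBlaschke hs (hblaschke _ ?_ ?_)
    · exact (pi_norm_lt_iff one_pos).mp hnorm
    · rwa [Ne, ← deriv_blaschke_smul_mul_eq_zero_iff a hs, mul_zero] at hne
  obtain ⟨w, -, hw⟩ := exists_critical_le_dualMeanValueRatio_of_frequently
    (isCompact_closedBall 0 ‖a‖) (contDiffAt_rescaledBlaschke_zero a) hderiv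
    (htendsto.frequently hcrit.frequently)
  exact ⟨w, hw⟩

end Blaschke

lemma exists_eq_prod_X_sub_C_of_splits {R : Type*} [CommRing R] [IsDomain R] {Q : R[X]}
    (hsplits : Q.Splits) (hQ : Q.Monic) :
    ∃ a : Fin Q.natDegree → R, Q = ∏ k, (X - C (a k)) := by
  classical
  let e : Q.roots ≃ Fin Q.natDegree := Fintype.equivFinOfCardEq
    (Q.roots.card_coe.trans hsplits.natDegree_eq_card_roots.symm)
  refine ⟨fun k ↦ (e.symm k).1, ?_⟩
  rw [Equiv.prod_comp e.symm fun x ↦ X - C x.1]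
  conv_lhs => rw [hsplits.eq_prod_roots_of_monic hQ]
  rw [← Multiset.map_univ, Finset.prod_eq_multiset_prod]

lemma exists_eval_eq_rescaledBlaschke_zero {P : ℂ[X]} (hP : P.Monic) (hP₀ : P.eval 0 = 0) :
    ∃ a : Fin (P.natDegree - 1) → ℂ, (fun w ↦ P.eval w) = rescaledBlaschke a 0 := by
  obtain ⟨Q, rfl⟩ : X ∣ P := X_dvd_iff.mpr (by rwa [coeff_zero_eq_eval_zero])
  have hQ : Q.Monic := monic_X.of_mul_monic_left hP
  obtain ⟨a, ha⟩ := exists_eq_prod_X_sub_C_of_splits (IsAlgClosed.splits Q) hQ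
  rw [natDegree_X_mul hQ.ne_zero, Nat.add_sub_cancel]
  refine ⟨a, funext fun w ↦ ?_⟩
  conv_lhs => rw [ha]
  simp [rescaledBlaschke, eval_prod]

/-- `N_n ≥ L_n`: a uniform lower bound `C` for the dual mean value quantity of
finite Blaschke products of degree `n` is also a lower bound for polynomials. -/
theorem N_n_ge_L_n (n : ℕ) (hn : 2 ≤ n) (C : ℝ) (hC : 0 < C)
    (hblaschke : ∀ (z : Fin (n - 1) → ℂ), (∀ k, ‖z k‖ < 1) →
      ∀ B : ℂ → ℂ,
        B = (fun w => w * ∏ k, (w - z k) / (1 - (starRingEnd ℂ) (z k) * w)) →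
        deriv B 0 ≠ 0 →
        ∃ c : ℂ, ‖c‖ < 1 ∧ deriv B c = 0 ∧ C ≤ ‖B c / (c * deriv B 0)‖) :
    ∀ P : Polynomial ℂ, P.Monic → P.natDegree = n → P.eval 0 = 0 →
      P.derivative.eval 0 ≠ 0 →
      ∃ c : ℂ, P.derivative.eval c = 0 ∧
        C ≤ ‖P.eval c / (c * P.derivative.eval 0)‖ := by
  rintro P hP rfl hP₀ hderiv
  obtain ⟨a, ha⟩ := exists_eval_eq_rescaledBlaschke_zero hP hP₀
  have hcrit := exists_critical_rescaledBlaschke_zero (a := a) (C := C)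
    (by rwa [← ha, Polynomial.deriv]) fun z hz ↦ hblaschke z hz (blaschke z) rfl
  simpa only [← ha, dualMeanValueRatio, Polynomial.deriv] using hcrit
end
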